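/- arXiv:math/0302181 — 10 statements merged into one kernel-verified Lean document; each statement's English description precedes it below -/
import Mathlib

section
/- Let (X, f) be a dynamical system. If m ∈ Per(X, f) and m1, m2 ∈ Per(X, f), then lcm(m1, m2) ∈ Per(X, f). Precisely: for any two periodic partitions of (X, f), of lengths m1 and m2, the dynamical system (X, f) admits a periodic partition of length lcm(m1, m2). -/
/-!
A periodic partition of length `m` is the same thing as a locally constant map `c : X → ZMod m`
satisfying `c (f x) = c x + 1` (`IsPeriodicPartition.exists_phase` and `mem_periods_of_phase`).
Two periodic partitions thus give a locally constant map `X → ZMod m₁ × ZMod m₂` which intertwines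
`f` with translation by `e = (1, 1)`. The element `e` has order `lcm m₁ m₂`, so the finite group
splits into `e`-orbits of exactly that size; after choosing a base point in each orbit, the
position within the orbit is a map to `ZMod (lcm m₁ m₂)` intertwining translation by `e` with
translation by `1` (`exists_orbit_position`). The composite is the required phase map.
-/

open Set Function

section Defs

variable {X : Type*} [TopologicalSpace X]

/-- A periodic partition of length `m` of the dynamical system given by `f : X → X`:
a family of clopen sets indexed by `ZMod m`, cyclically permuted by `f`,
pairwise disjoint, covering `X`. -/
def IsPeriodicPartition (f : X → X) (m : ℕ) (W : ZMod m → Set X) : Prop :=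
  0 < m ∧ (∀ i, IsClopen (W i)) ∧ (∀ i, W (i + 1) = f '' W i) ∧
    (Pairwise fun i j => Disjoint (W i) (W j)) ∧ (⋃ i, W i) = Set.univ

/-- The set of periods of a dynamical system. -/
def Periods (f : X → X) : Set ℕ :=
  {m | ∃ W : ZMod m → Set X, IsPeriodicPartition f m W}

/-- The set `A(k, l) = ⋃_{s=0}^{D-1} f^s (W₁ k ∩ W₂ l)`, `D = lcm m₁ m₂`. -/
def compatSet (f : X → X) {m₁ m₂ : ℕ} (W₁ : ZMod m₁ → Set X) (W₂ : ZMod m₂ → Set X)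
    (k : ZMod m₁) (l : ZMod m₂) : Set X :=
  ⋃ s ∈ Finset.range (Nat.lcm m₁ m₂), f^[s] '' (W₁ k ∩ W₂ l)

/-- Two periodic partitions are compatible if every `A(k, l)` is empty or all of `X`. -/
def Compatible (f : X → X) {m₁ m₂ : ℕ} (W₁ : ZMod m₁ → Set X) (W₂ : ZMod m₂ → Set X) : Prop :=
  ∀ k l, compatSet f W₁ W₂ k l = ∅ ∨ compatSet f W₁ W₂ k l = Set.univ

/-- Indecomposability of a dynamical system. -/
def Indecomposable (f : X → X) : Prop :=
  ∀ X₁ X₂ : Set X, IsClosed X₁ → IsClosed X₂ → f '' X₁ = X₁ → f '' X₂ = X₂ →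
    Disjoint X₁ X₂ → X₁ ∪ X₂ = Set.univ → X₁ = ∅ ∨ X₂ = ∅

end Defs

/-- Ultranatural numbers: a prime exponent in `ℕ ∪ {∞}` for every prime. -/
abbrev Ultranat := Nat.Primes → ℕ∞

/-- `Phi A` : the ultranatural number whose exponent at `p` is
`sup {k : p^k divides some element of A}`. -/
noncomputable def Phi (A : Set ℕ) : Ultranat :=
  fun p => ⨆ k ∈ {k : ℕ | ∃ a ∈ A, (p : ℕ) ^ k ∣ a}, (k : ℕ∞)

/-- `Phi0 n` : prime factorization of `n` as an ultranatural number. -/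
noncomputable def Phi0 (n : ℕ) : Ultranat := Phi {n}

/-- A regular subset of the positive natural numbers: nonempty, closed under
divisors and least common multiples. -/
def IsRegularSet (A : Set ℕ) : Prop :=
  A.Nonempty ∧ 0 ∉ A ∧ (∀ a ∈ A, ∀ d : ℕ, d ∣ a → d ∈ A) ∧
    ∀ a ∈ A, ∀ b ∈ A, Nat.lcm a b ∈ A

instance (m : ℕ) : TopologicalSpace (ZMod m) := ⊥
instance (m : ℕ) : DiscreteTopology (ZMod m) := ⟨rfl⟩

/-- The phase space of the odometer built on the sequence `n`: the inverse limit
of the cyclic groups `ZMod (n i)` along the reduction maps, topologized as a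
subspace of the product of the discrete spaces `ZMod (n i)`. -/
abbrev OdometerCarrier (n : ℕ → ℕ) (hd : ∀ i, n i ∣ n (i + 1)) : Type :=
  {a : ∀ i, ZMod (n i) // ∀ i, ZMod.castHom (hd i) (ZMod (n i)) (a (i + 1)) = a i}

/-- The odometer map: translation by `e = (1, 1, 1, …)`. -/
def odometerAdd (n : ℕ → ℕ) (hd : ∀ i, n i ∣ n (i + 1)) (a : OdometerCarrier n hd) :
    OdometerCarrier n hd :=
  ⟨fun i => a.1 i + 1, fun i => by simp [map_add, map_one, a.2 i]⟩

/-- Iterate of a bijection over an integer exponent. -/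
def zIter {Y : Type*} (f : Equiv.Perm Y) (i : ℤ) : Y → Y := ⇑(f ^ i)

/-- The index of the piece containing a point is a locally constant phase map. -/
theorem IsPeriodicPartition.exists_phase {X : Type*} [TopologicalSpace X] {f : X → X} {m : ℕ}
    {W : ZMod m → Set X} (h : IsPeriodicPartition f m W) :
    ∃ c : X → ZMod m, IsLocallyConstant c ∧ ∀ x, c (f x) = c x + 1 := by
  obtain ⟨-, hclopen, hstep, hdisj, hcover⟩ := h
  have hex : ∀ x, ∃ i, x ∈ W i := fun x => by
    simpa using (hcover ▸ mem_univ x : x ∈ ⋃ i, W i)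
  choose c hc using hex
  have huniq : ∀ x i, x ∈ W i → c x = i := fun x i hx => by
    by_contra hne
    exact Set.disjoint_left.mp (hdisj hne) (hc x) hx
  refine ⟨c, IsLocallyConstant.iff_isOpen_fiber.mpr fun i => ?_, fun x => ?_⟩
  · have hfib : c ⁻¹' {i} = W i :=
      Set.ext fun x => ⟨fun (hx : c x = i) => hx ▸ hc x, huniq x i⟩
    exact hfib ▸ (hclopen i).isOpen
  · exact huniq _ _ (hstep (c x) ▸ mem_image_of_mem f (hc x))

/-- The fibres of a locally constant phase map form a periodic partition. -/
theorem mem_periods_of_phase {X : Type*} [TopologicalSpace X] {f : X → X} (hf : Surjective f)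
    {m : ℕ} (hm : 0 < m) {c : X → ZMod m} (hc : IsLocallyConstant c)
    (hstep : ∀ x, c (f x) = c x + 1) : m ∈ Periods f := by
  refine ⟨fun i => {x | c x = i}, hm, fun i => hc.isClopen_fiber i, fun i => ?_, ?_, ?_⟩
  · ext y
    obtain ⟨x, rfl⟩ := hf y
    constructor
    · intro hx
      exact ⟨x, add_right_cancel ((hstep x).symm.trans hx), rfl⟩
    · rintro ⟨z, hz, hzx⟩
      rw [← hzx]
      exact (hstep z).trans (congrArg (· + 1) hz)
  · intro i j hij
    exact Set.disjoint_left.mpr fun x hx hx' => hij (hx.symm.trans hx')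
  · exact Set.eq_univ_of_forall fun x => mem_iUnion.mpr ⟨c x, rfl⟩

/-- The position of `g` within its coset of `⟨e⟩`, relative to a chosen representative. -/
theorem exists_orbit_position {G : Type*} [AddCommGroup G] (e : G) :
    ∃ φ : G → ZMod (addOrderOf e), ∀ g, φ (g + e) = φ g + 1 := by
  let r : G → G := fun g => (QuotientAddGroup.mk g : G ⧸ AddSubgroup.zmultiples e).out
  have hr : ∀ g, r (g + e) = r g := fun g =>
    congrArg Quotient.out
      (QuotientAddGroup.mk_add_of_mem g (AddSubgroup.mem_zmultiples e))
  have hex : ∀ g, ∃ k : ℤ, k • e = -r g + g := fun g =>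
    AddSubgroup.mem_zmultiples_iff.mp
      (QuotientAddGroup.eq.mp (QuotientAddGroup.out_eq' (QuotientAddGroup.mk g)))
  choose k hk using hex
  refine ⟨fun g => (k g : ZMod (addOrderOf e)), fun g => ?_⟩
  have hsmul : k (g + e) • e = (k g + 1) • e := by
    rw [hk, hr, add_zsmul, hk, one_zsmul, add_assoc]
  have hcast := (ZMod.intCast_eq_intCast_iff _ _ _).mpr (zsmul_eq_zsmul_iff_modEq.mp hsmul)
  simpa using hcast

/-- If `(X, f)` admits periodic partitions of lengths `m₁` and `m₂`,
then it admits a periodic partition of length `lcm m₁ m₂`;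
in particular `Periods (X, f)` is closed under `lcm`. -/
theorem stmt0 {X : Type*} [TopologicalSpace X] [CompactSpace X] [T2Space X]
    (f : X ≃ₜ X) {m₁ m₂ : ℕ} {W₁ : ZMod m₁ → Set X} {W₂ : ZMod m₂ → Set X}
    (h₁ : IsPeriodicPartition (⇑f) m₁ W₁) (h₂ : IsPeriodicPartition (⇑f) m₂ W₂) :
    Nat.lcm m₁ m₂ ∈ Periods (⇑f) := by
  obtain ⟨c₁, hc₁, hs₁⟩ := h₁.exists_phase
  obtain ⟨c₂, hc₂, hs₂⟩ := h₂.exists_phase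
  have horder : addOrderOf ((1, 1) : ZMod m₁ × ZMod m₂) = Nat.lcm m₁ m₂ := by
    rw [Prod.addOrderOf_mk, ZMod.addOrderOf_one, ZMod.addOrderOf_one]
  obtain ⟨φ, hφ⟩ := exists_orbit_position ((1, 1) : ZMod m₁ × ZMod m₂)
  rw [← horder]
  refine mem_periods_of_phase f.surjective (horder ▸ Nat.lcm_pos h₁.1 h₂.1)
    ((hc₁.prodMk hc₂).comp φ) fun x => ?_
  simpa [hs₁, hs₂] using hφ (c₁ x, c₂ x)
end

section
/- Let (X, f) be a dynamical system and let m ∈ Per(X, f) with m > 1. Then (X, f) is indecomposable if and only if any two periodic partitions of (X, f) of length m are equivalent (i.e., the periodic partition of length m is unique up to a cyclic permutation of indices). -/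
/-!
Both directions compare partitions with clopen invariant sets.

If the system is indecomposable and `W`, `W'` are periodic partitions, pick `x ∈ W a ∩ W' b` and
put `k = a - b`. The set `⋃ j, W (j + k) ∩ W' j` is clopen, invariant and contains `x`, hence it is
all of `X`, which says exactly that `W' j = W (j + k)`.

Conversely, if `X = X₁ ∪ X₂` splits into two nonempty closed invariant pieces and `W` is a periodic
partition, then so is `(W j ∩ X₁) ∪ (W (j + 1) ∩ X₂)`, obtained by shifting the indices on `X₂`
only. If it is a shift of `W` by `k`, then a point of `X₁` gives `k = 0` and a point of `X₂` gives
`k = 1`, which is impossible in `ZMod m` for `m > 1`.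
-/

open Set Function

/-- Two partitions indexed by `ZMod m` are equivalent when one is obtained from the
other by a cyclic permutation of the indices. -/
def CyclicEquiv {X : Type*} {m : ℕ} (W W' : ZMod m → Set X) : Prop :=
  ∃ k : ZMod m, ∀ j : ZMod m, W' j = W (j + k)

namespace IsPeriodicPartition

variable {X : Type*} [TopologicalSpace X] {f : X ≃ₜ X} {m : ℕ} {W W' : ZMod m → Set X}

theorem exists_mem (h : IsPeriodicPartition (⇑f) m W) (x : X) : ∃ i, x ∈ W i :=
  Set.mem_iUnion.1 (h.2.2.2.2 ▸ Set.mem_univ x)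

theorem index_unique (h : IsPeriodicPartition (⇑f) m W) {x : X} {i j : ZMod m}
    (hi : x ∈ W i) (hj : x ∈ W j) : i = j := by
  by_contra hij
  exact Set.disjoint_left.1 (h.2.2.2.1 hij) hi hj

/-- The clopen set of points whose index in `W` exceeds their index in `W'` by `k` is everything
as soon as it contains a point, by indecomposability. -/
theorem overlap_eq_univ (hf : Indecomposable (⇑f)) (h : IsPeriodicPartition (⇑f) m W)
    (h' : IsPeriodicPartition (⇑f) m W') (k : ZMod m)
    (hne : (⋃ j, W (j + k) ∩ W' j).Nonempty) : (⋃ j, W (j + k) ∩ W' j) = Set.univ := by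
  have : NeZero m := ⟨h.1.ne'⟩
  have hclopen : IsClopen (⋃ j, W (j + k) ∩ W' j) :=
    isClopen_iUnion_of_finite fun j => (h.2.1 _).inter (h'.2.1 _)
  have hinv : f '' (⋃ j, W (j + k) ∩ W' j) = ⋃ j, W (j + k) ∩ W' j := by
    rw [Set.image_iUnion]
    have hstep : ∀ j, f '' (W (j + k) ∩ W' j) = W (j + 1 + k) ∩ W' (j + 1) := fun j => by
      rw [Set.image_inter f.injective, ← h.2.2.1, ← h'.2.2.1, add_right_comm]
    simp_rw [hstep]
    exact (Equiv.addRight (1 : ZMod m)).surjective.iUnion_comp (fun j => W (j + k) ∩ W' j)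
  have hinv' : f '' (⋃ j, W (j + k) ∩ W' j)ᶜ = (⋃ j, W (j + k) ∩ W' j)ᶜ := by
    rw [Set.image_compl_eq f.bijective, hinv]
  rcases hf _ _ hclopen.1 hclopen.compl.1 hinv hinv' disjoint_compl_right
    (Set.union_compl_self _) with h0 | h0
  · exact absurd h0 hne.ne_empty
  · exact Set.compl_empty_iff.1 h0

/-- Shifting the indices by one on one piece of an invariant closed splitting yields a periodic
partition again. -/
theorem shift_piece (h : IsPeriodicPartition (⇑f) m W) {X₁ X₂ : Set X}
    (hc₁ : IsClosed X₁) (hc₂ : IsClosed X₂) (hi₁ : f '' X₁ = X₁) (hi₂ : f '' X₂ = X₂)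
    (hd : Disjoint X₁ X₂) (hu : X₁ ∪ X₂ = Set.univ) :
    IsPeriodicPartition (⇑f) m fun j => (W j ∩ X₁) ∪ (W (j + 1) ∩ X₂) := by
  have hX : IsCompl X₁ X₂ := ⟨hd, codisjoint_iff.2 hu⟩
  have ho₁ : IsOpen X₁ := by
    rw [← hX.symm.compl_eq]; exact hc₂.isOpen_compl
  have ho₂ : IsOpen X₂ := by
    rw [← hX.compl_eq]; exact hc₁.isOpen_compl
  refine ⟨h.1, fun j => ((h.2.1 _).inter ⟨hc₁, ho₁⟩).union ((h.2.1 _).inter ⟨hc₂, ho₂⟩),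
    fun j => ?_, fun i j hij => Set.disjoint_left.2 ?_, Set.eq_univ_of_forall fun x => ?_⟩
  · rw [Set.image_union, Set.image_inter f.injective, Set.image_inter f.injective,
      ← h.2.2.1, ← h.2.2.1, hi₁, hi₂]
  · rintro x (⟨hi, h1⟩ | ⟨hi, h1⟩) (⟨hj, h2⟩ | ⟨hj, h2⟩)
    · exact hij (h.index_unique hi hj)
    · exact Set.disjoint_left.1 hd h1 h2
    · exact Set.disjoint_left.1 hd h2 h1
    · exact hij (add_right_cancel (h.index_unique hi hj))
  · obtain ⟨i, hi⟩ := h.exists_mem x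
    rcases (hu ▸ Set.mem_univ x : x ∈ X₁ ∪ X₂) with hx | hx
    · exact Set.mem_iUnion.2 ⟨i, Or.inl ⟨hi, hx⟩⟩
    · exact Set.mem_iUnion.2 ⟨i - 1, Or.inr ⟨by rwa [sub_add_cancel], hx⟩⟩

end IsPeriodicPartition

/-- for `m ∈ Per(X, f)`, `m > 1`, the system `(X, f)` is indecomposable
iff any two periodic partitions of length `m` are equivalent. -/
theorem stmt1 {X : Type*} [TopologicalSpace X] [CompactSpace X] [T2Space X]
    (f : X ≃ₜ X) {m : ℕ} (hm : 1 < m) (hmem : m ∈ Periods (⇑f)) :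
    Indecomposable (⇑f) ↔
      ∀ W W' : ZMod m → Set X, IsPeriodicPartition (⇑f) m W →
        IsPeriodicPartition (⇑f) m W' → CyclicEquiv W W' := by
  constructor
  · intro hf W W' h h'
    rcases isEmpty_or_nonempty X with hX | ⟨⟨x⟩⟩
    · exact ⟨0, fun j => Subsingleton.elim _ _⟩
    obtain ⟨a, ha⟩ := h.exists_mem x
    obtain ⟨b, hb⟩ := h'.exists_mem x
    have huniv := h.overlap_eq_univ hf h' (a - b)
      ⟨x, Set.mem_iUnion.2 ⟨b, by rwa [add_sub_cancel], hb⟩⟩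
    refine ⟨a - b, fun j => Set.ext fun y => ?_⟩
    obtain ⟨i, hi, hi'⟩ := Set.mem_iUnion.1 (huniv ▸ Set.mem_univ y)
    constructor
    · intro hy
      rwa [h'.index_unique hy hi']
    · intro hy
      rwa [add_right_cancel (h.index_unique hy hi)]
  · intro hall X₁ X₂ hc₁ hc₂ hi₁ hi₂ hd hu
    by_contra! hne
    obtain ⟨⟨x, hx⟩, ⟨y, hy⟩⟩ := hne
    obtain ⟨W, h⟩ := hmem
    obtain ⟨k, hk⟩ := hall W _ h (h.shift_piece hc₁ hc₂ hi₁ hi₂ hd hu)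
    obtain ⟨a, ha⟩ := h.exists_mem x
    obtain ⟨b, hb⟩ := h.exists_mem y
    have hxa : x ∈ W (a + k) := by
      rw [← hk a]
      exact Or.inl ⟨ha, hx⟩
    have hyb : y ∈ W (b - 1 + k) := by
      rw [← hk (b - 1)]
      exact Or.inr ⟨by rwa [sub_add_cancel], hy⟩
    have hk0 : k = 0 := by simpa using h.index_unique ha hxa
    have hk1 := h.index_unique hb hyb
    have : Fact (1 < m) := ⟨hm⟩
    refine one_ne_zero (α := ZMod m) ?_
    rw [hk0, add_zero] at hk1
    exact sub_eq_self.1 hk1.symm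
end

section
/- Let (X, f) be a dynamical system, let m1, m2 ∈ Per(X, f), and let W^(m1) be any periodic partition of (X, f) of length m1. Then there exists a periodic partition W^(m2) of (X, f) of length m2 which is compatible with W^(m1). -/
/-!
A periodic partition of length `m` is the same thing as a locally constant label `φ : X → ZMod m`
with `φ (f x) = φ x + 1` (`exists_label`, `isPeriodicPartition_fibers`). Take labels `φ₁`, `φ₂` of
lengths `m₁`, `m₂`, and let `g = gcd m₁ m₂`. The difference `δ = φ₁ - φ₂` modulo `g` is
`f`-invariant, so adding to `φ₂` a lift of `δ` to `ZMod m₂` gives another label `ψ` of length `m₂`,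
and now `φ₁ ≡ ψ` modulo `g` everywhere (`exists_label_congr`). By the Chinese remainder theorem the
pairs `(a, b)` with `a ≡ b` modulo `g` form a single orbit, of length `lcm m₁ m₂`, under adding
`(1, 1)` (`exists_lt_lcm_natCast_eq`); hence every nonempty cell `φ₁ = k, ψ = l` sweeps out all of
`X` in `lcm m₁ m₂` steps.
-/

open Set Function

/-- The label of a point is the index of the cell containing it. -/
theorem exists_label {X : Type*} [TopologicalSpace X] {f : X → X} {m : ℕ} {W : ZMod m → Set X}
    (h : IsPeriodicPartition f m W) :
    ∃ φ : X → ZMod m, IsLocallyConstant φ ∧ (∀ x, φ (f x) = φ x + 1) ∧ ∀ i, W i = {x | φ x = i} := by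
  obtain ⟨-, hclopen, hstep, hdisj, hcover⟩ := h
  choose φ hφ using fun x : X => mem_iUnion.1 (hcover ▸ mem_univ x : x ∈ ⋃ i, W i)
  have huniq : ∀ x i, x ∈ W i → φ x = i := fun x i hx => by
    by_contra hne
    exact (disjoint_left.1 (hdisj hne)) (hφ x) hx
  have hW : ∀ i, W i = {x | φ x = i} := fun i =>
    Subset.antisymm (fun x hx => huniq x i hx) (by rintro x rfl; exact hφ x)
  refine ⟨φ, IsLocallyConstant.iff_isOpen_fiber.2 fun i => ?_, fun x => ?_, hW⟩
  · have := (hclopen i).isOpen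
    rwa [hW i] at this
  · exact huniq _ _ (hstep _ ▸ mem_image_of_mem f (hφ x))

theorem isPeriodicPartition_fibers {X : Type*} [TopologicalSpace X] {f : X → X} {m : ℕ}
    (hf : Surjective f) (hm : 0 < m) {φ : X → ZMod m} (hφ : IsLocallyConstant φ)
    (hstep : ∀ x, φ (f x) = φ x + 1) : IsPeriodicPartition f m fun i => {x | φ x = i} := by
  refine ⟨hm, hφ.isClopen_fiber, fun i => ?_, fun i j hij => ?_, ?_⟩
  · ext y
    obtain ⟨x, rfl⟩ := hf y
    constructor
    · intro hx
      exact ⟨x, add_right_cancel ((hstep x).symm.trans hx), rfl⟩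
    · rintro ⟨z, hz, hzx⟩
      change φ z = i at hz
      change φ (f x) = i + 1
      rw [← hzx, hstep, hz]
  · exact disjoint_left.2 fun x hi hj => hij (hi.symm.trans hj)
  · exact eq_univ_of_forall fun x => mem_iUnion.2 ⟨φ x, rfl⟩

/-- A label of length `n` can be corrected by an invariant function so that it agrees with a given
label of length `m` modulo `gcd m n`. -/
theorem exists_label_congr {X : Type*} [TopologicalSpace X] {f : X → X} {m n : ℕ} (hm : 0 < m)
    {φ : X → ZMod m} {χ : X → ZMod n} (hφ : IsLocallyConstant φ) (hχ : IsLocallyConstant χ)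
    (hφf : ∀ x, φ (f x) = φ x + 1) (hχf : ∀ x, χ (f x) = χ x + 1) :
    ∃ ψ : X → ZMod n, IsLocallyConstant ψ ∧ (∀ x, ψ (f x) = ψ x + 1) ∧
      ∀ x, ZMod.castHom (Nat.gcd_dvd_left m n) (ZMod (m.gcd n)) (φ x) =
        ZMod.castHom (Nat.gcd_dvd_right m n) (ZMod (m.gcd n)) (ψ x) := by
  have : NeZero (m.gcd n) := ⟨(Nat.gcd_pos_of_pos_left n hm).ne'⟩
  set p := ZMod.castHom (Nat.gcd_dvd_left m n) (ZMod (m.gcd n))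
  set q := ZMod.castHom (Nat.gcd_dvd_right m n) (ZMod (m.gcd n))
  refine ⟨fun x => χ x + ((p (φ x) - q (χ x)).val : ZMod n),
    hφ.comp₂ hχ fun a b => b + ((p a - q b).val : ZMod n), fun x => ?_, fun x => ?_⟩
  · have hinv : p (φ (f x)) - q (χ (f x)) = p (φ x) - q (χ x) := by
      rw [hφf, hχf, map_add, map_add, map_one, map_one]
      ring
    beta_reduce
    rw [hinv, hχf]
    ring
  · rw [map_add, map_natCast, ZMod.natCast_zmod_val]
    ring

/-- The Chinese remainder theorem for moduli that need not be coprime, in terms of `ZMod`. -/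
theorem exists_lt_lcm_natCast_eq {m n : ℕ} (hm : 0 < m) (hn : 0 < n) (a : ZMod m) (b : ZMod n)
    (h : ZMod.castHom (Nat.gcd_dvd_left m n) (ZMod (m.gcd n)) a =
      ZMod.castHom (Nat.gcd_dvd_right m n) (ZMod (m.gcd n)) b) :
    ∃ s < m.lcm n, (s : ZMod m) = a ∧ (s : ZMod n) = b := by
  have : NeZero m := ⟨hm.ne'⟩
  have : NeZero n := ⟨hn.ne'⟩
  have hmod : a.val ≡ b.val [MOD m.gcd n] := by
    rw [← ZMod.natCast_eq_natCast_iff]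
    rw [← ZMod.natCast_zmod_val a, ← ZMod.natCast_zmod_val b, map_natCast, map_natCast] at h
    exact h
  have hs := (Nat.chineseRemainder' hmod).2
  refine ⟨Nat.chineseRemainder' hmod, Nat.chineseRemainder'_lt_lcm hmod hm.ne' hn.ne', ?_, ?_⟩
  · rw [(ZMod.natCast_eq_natCast_iff _ _ _).2 hs.1, ZMod.natCast_zmod_val]
  · rw [(ZMod.natCast_eq_natCast_iff _ _ _).2 hs.2, ZMod.natCast_zmod_val]

theorem label_iterate {X : Type*} {f : X → X} {m : ℕ} {φ : X → ZMod m}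
    (hφ : ∀ x, φ (f x) = φ x + 1) (s : ℕ) (x : X) : φ (f^[s] x) = φ x + s := by
  induction s with
  | zero => simp
  | succ s ih => rw [iterate_succ_apply', hφ, ih]; push_cast; ring

/-- for any periodic partition `W₁` of length `m₁` and any
`m₂ ∈ Per(X, f)` there exists a periodic partition of length `m₂`
compatible with `W₁`. -/
theorem stmt2 {X : Type*} [TopologicalSpace X] [CompactSpace X] [T2Space X]
    (f : X ≃ₜ X) {m₁ m₂ : ℕ} (W₁ : ZMod m₁ → Set X)
    (h₁ : IsPeriodicPartition (⇑f) m₁ W₁) (h₂ : m₂ ∈ Periods (⇑f)) :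
    ∃ W₂ : ZMod m₂ → Set X, IsPeriodicPartition (⇑f) m₂ W₂ ∧ Compatible (⇑f) W₁ W₂ := by
  obtain ⟨W, hW⟩ := h₂
  have hm₁ := h₁.1
  have hm₂ := hW.1
  obtain ⟨φ, hφ, hφf, hW₁⟩ := exists_label h₁
  obtain ⟨χ, hχ, hχf, -⟩ := exists_label hW
  obtain ⟨ψ, hψ, hψf, hcongr⟩ := exists_label_congr hm₁ hφ hχ hφf hχf
  refine ⟨fun l => {x | ψ x = l}, isPeriodicPartition_fibers f.surjective hm₂ hψ hψf,
    fun k l => ?_⟩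
  simp only [compatSet, hW₁]
  rcases eq_empty_or_nonempty ({x | φ x = k} ∩ {x | ψ x = l}) with he | ⟨z, rfl, rfl⟩
  · left
    simp [he]
  · right
    refine eq_univ_of_forall fun y => ?_
    -- `s` is the time needed to pass from the labels of `z` to those of `y`.
    obtain ⟨s, hs, hs₁, hs₂⟩ := exists_lt_lcm_natCast_eq hm₁ hm₂ (φ y - φ z) (ψ y - ψ z)
      (by rw [map_sub, map_sub, hcongr y, hcongr z])
    obtain ⟨x, rfl⟩ := (f.surjective.iterate s) y
    refine mem_iUnion₂.2 ⟨s, Finset.mem_range.2 hs, x, ⟨?_, ?_⟩, rfl⟩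
    · rw [label_iterate hφf] at hs₁
      exact show φ x = φ z by linear_combination -hs₁
    · rw [label_iterate hψf] at hs₂
      exact show ψ x = ψ z by linear_combination -hs₂
end

section
/- Let (X, f) be an indecomposable dynamical system. Then any two periodic partitions of (X, f) are compatible. -/
/-!
The image of `W₁ k ∩ W₂ l` under `f^s` is `W₁ (k + s) ∩ W₂ (l + s)`, so it returns to itself for
`s = lcm m₁ m₂`. Hence `A(k, l)`, a union of images over one full cycle, is `f`-invariant; it is
also clopen, as a finite union of clopen sets. Indecomposability applied to `A(k, l)` and its
complement gives the claim.
-/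


open Set Function

theorem IsPeriodicPartition.iterate_image {X : Type*} [TopologicalSpace X] {f : X → X} {m : ℕ}
    {W : ZMod m → Set X} (h : IsPeriodicPartition f m W) (k : ZMod m) (s : ℕ) :
    f^[s] '' W k = W (k + s) := by
  induction s with
  | zero => simp
  | succ s ih =>
    rw [Function.iterate_succ', Set.image_comp, ih, ← h.2.2.1, Nat.cast_succ, add_assoc]

theorem iterate_image_inter {X : Type*} [TopologicalSpace X] {f : X → X}
    (hf : Function.Injective f) {m₁ m₂ : ℕ} {W₁ : ZMod m₁ → Set X} {W₂ : ZMod m₂ → Set X}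
    (h₁ : IsPeriodicPartition f m₁ W₁) (h₂ : IsPeriodicPartition f m₂ W₂)
    (k : ZMod m₁) (l : ZMod m₂) (s : ℕ) :
    f^[s] '' (W₁ k ∩ W₂ l) = W₁ (k + s) ∩ W₂ (l + s) := by
  rw [Set.image_inter (hf.iterate s), h₁.iterate_image, h₂.iterate_image]

theorem isClopen_compatSet {X : Type*} [TopologicalSpace X] {f : X → X}
    (hf : Function.Injective f) {m₁ m₂ : ℕ} {W₁ : ZMod m₁ → Set X} {W₂ : ZMod m₂ → Set X}
    (h₁ : IsPeriodicPartition f m₁ W₁) (h₂ : IsPeriodicPartition f m₂ W₂)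
    (k : ZMod m₁) (l : ZMod m₂) : IsClopen (compatSet f W₁ W₂ k l) := by
  refine isClopen_biUnion_finset fun s _ => ?_
  rw [iterate_image_inter hf h₁ h₂]
  exact (h₁.2.1 _).inter (h₂.2.1 _)

theorem image_compatSet {X : Type*} [TopologicalSpace X] {f : X → X}
    (hf : Function.Injective f) {m₁ m₂ : ℕ} {W₁ : ZMod m₁ → Set X} {W₂ : ZMod m₂ → Set X}
    (h₁ : IsPeriodicPartition f m₁ W₁) (h₂ : IsPeriodicPartition f m₂ W₂)
    (k : ZMod m₁) (l : ZMod m₂) :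
    f '' compatSet f W₁ W₂ k l = compatSet f W₁ W₂ k l := by
  have hper : f^[Nat.lcm m₁ m₂] '' (W₁ k ∩ W₂ l) = f^[0] '' (W₁ k ∩ W₂ l) := by
    simp only [iterate_image_inter hf h₁ h₂,
      (ZMod.natCast_eq_zero_iff _ _).2 (Nat.dvd_lcm_left m₁ m₂),
      (ZMod.natCast_eq_zero_iff _ _).2 (Nat.dvd_lcm_right m₁ m₂), Nat.cast_zero]
  have hpos : 0 < Nat.lcm m₁ m₂ := Nat.lcm_pos h₁.1 h₂.1
  unfold compatSet
  simp only [Set.image_iUnion, ← Set.image_comp, ← Function.iterate_succ']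
  apply Set.Subset.antisymm
  · refine Set.iUnion₂_subset fun s hs => ?_
    rw [Finset.mem_range] at hs
    rcases Nat.lt_or_eq_of_le (Nat.succ_le_of_lt hs) with h | h
    · exact Set.subset_biUnion_of_mem (u := fun s => f^[s] '' (W₁ k ∩ W₂ l))
        (Finset.mem_coe.2 (Finset.mem_range.2 h))
    · -- the last piece `f^D B` is the first piece `f^0 B`
      rw [h, hper]
      exact Set.subset_biUnion_of_mem (u := fun s => f^[s] '' (W₁ k ∩ W₂ l))
        (Finset.mem_coe.2 (Finset.mem_range.2 hpos))
  · refine Set.iUnion₂_subset fun s hs => ?_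
    rw [Finset.mem_range] at hs
    rcases s with _ | s
    · obtain ⟨d, hd⟩ := Nat.exists_eq_succ_of_ne_zero hpos.ne'
      rw [← hper, hd]
      exact Set.subset_biUnion_of_mem (u := fun s => f^[s + 1] '' (W₁ k ∩ W₂ l))
        (Finset.mem_coe.2 (Finset.mem_range.2 d.lt_succ_self))
    · exact Set.subset_biUnion_of_mem (u := fun s => f^[s + 1] '' (W₁ k ∩ W₂ l))
        (Finset.mem_coe.2 (Finset.mem_range.2 (by omega)))

/-- in an indecomposable dynamical system, any two periodic
partitions are compatible. -/
theorem stmt3 {X : Type*} [TopologicalSpace X] [CompactSpace X] [T2Space X]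
    (f : X ≃ₜ X) (hind : Indecomposable (⇑f)) {m₁ m₂ : ℕ}
    (W₁ : ZMod m₁ → Set X) (W₂ : ZMod m₂ → Set X)
    (h₁ : IsPeriodicPartition (⇑f) m₁ W₁) (h₂ : IsPeriodicPartition (⇑f) m₂ W₂) :
    Compatible (⇑f) W₁ W₂ := by
  intro k l
  have hA := isClopen_compatSet f.injective h₁ h₂ k l
  have hinv := image_compatSet f.injective h₁ h₂ k l
  refine (hind _ _ hA.isClosed hA.compl.isClosed hinv ?_ disjoint_compl_right
    (Set.union_compl_self _)).imp_right Set.compl_empty_iff.1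
  rw [Set.image_compl_eq f.bijective, hinv]
end

section
/- Let (X, f) be a dynamical system, let x ∈ X be a recurrent point, and let U be a closed neighborhood of x such that for some n ∈ ℕ one has f^{nk}(x) ∈ U for all k ∈ ℤ. Let m = min{ n ∈ ℕ : f^{nk}(x) ∈ U for all k ∈ ℤ }. Then the subsystem (closure(Orb_f(x)), f restricted to it) admits a periodic partition W_0, …, W_{m-1} of length m such that x ∈ W_0 ⊆ U. -/
/-!
Write `T k = f ^ k` and let `orb d y` be the closure of `{T (d * k) y : k ∈ ℤ}`, so that
`C = orb 1 x` and `orb m x ⊆ U`.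

Bounded gaps make `C` minimal: `x ∈ orb 1 y` for every `y ∈ orb 1 x` (`mem_orb_one_symm`).
Minimality passes to the power `T m` (`mem_orb_symm`): take a minimal nonempty closed
`T m`-invariant `V ⊆ orb m x`. The union of `T 0 V, …, T (m - 1) V` is closed and `T`-invariant,
so it contains `x`, and therefore `orb m x` is contained in a translate of `V`, which is minimal.

Consequently the set `D` of all `d` with `x ∈ orb m (T d x)` is a subgroup of `ℤ` containing `m`.
If `r ∈ D` then `T (r * k) x ∈ orb m x ⊆ U` for all `k`, so the least positive element of `D`
is `m` by the choice of `m`, i.e. `D = mℤ` (`dvd_of_mem_orb`). Hence the closed sets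
`orb m (T k x)`, `k` modulo `m`, are pairwise disjoint; they cover `C`, are finitely many, so they
are clopen in `C`, and `f` permutes them cyclically.
-/

open Set Function

/-- A recurrent point: every neighborhood is visited by the orbit with bounded gaps. -/
def RecurrentPt {X : Type*} [TopologicalSpace X] (f : X ≃ₜ X) (x : X) : Prop :=
  ∀ U ∈ nhds x, ∃ n : ℕ, 0 < n ∧
    ∀ k : ℤ, ∃ i : ℤ, k ≤ i ∧ i ≤ k + n - 1 ∧ zIter f.toEquiv i x ∈ U

/-! ### Integer iterates and orbit closures -/

/-- The closure of the orbit of `x` under the `d`-th power of `f`. -/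
def orb {X : Type*} [TopologicalSpace X] (f : X ≃ₜ X) (d : ℤ) (x : X) : Set X :=
  closure (Set.range fun k : ℤ => zIter f.toEquiv (d * k) x)

section Helpers

variable {X : Type*} [TopologicalSpace X] (f : X ≃ₜ X)

lemma zIter_zero (x : X) : zIter f.toEquiv 0 x = x := by simp [zIter]

lemma zIter_one (x : X) : zIter f.toEquiv 1 x = f x := by simp [zIter]

lemma zIter_zIter (i j : ℤ) (x : X) :
    zIter f.toEquiv i (zIter f.toEquiv j x) = zIter f.toEquiv (i + j) x := by
  simp [zIter, zpow_add]

lemma continuous_zIter (i : ℤ) : Continuous (zIter f.toEquiv i) := by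
  induction i using Int.induction_on with
  | zero => exact continuous_id.congr fun x => (zIter_zero f x).symm
  | succ i ih =>
    refine (ih.comp f.continuous).congr fun x => ?_
    rw [comp_apply, ← zIter_one f x, zIter_zIter]
  | pred i ih =>
    refine (ih.comp f.symm.continuous).congr fun x => ?_
    have h : x = zIter f.toEquiv 1 (f.symm x) := by simp [zIter_one]
    conv_rhs => rw [h]
    rw [comp_apply, zIter_zIter]
    congr 1
    ring

lemma isClosed_orb (d : ℤ) (x : X) : IsClosed (orb f d x) := isClosed_closure

lemma zIter_mem_orb_self (d k : ℤ) (x : X) : zIter f.toEquiv (d * k) x ∈ orb f d x :=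
  subset_closure ⟨k, rfl⟩

lemma mem_orb_self (d : ℤ) (x : X) : x ∈ orb f d x := by
  simpa [zIter_zero] using zIter_mem_orb_self f d 0 x

lemma orb_subset {d : ℤ} {x : X} {V : Set X} (hV : IsClosed V)
    (h : ∀ k : ℤ, zIter f.toEquiv (d * k) x ∈ V) : orb f d x ⊆ V :=
  closure_minimal (by rintro _ ⟨k, rfl⟩; exact h k) hV

lemma zIter_mem_orb {d : ℤ} {x y : X} (j : ℤ) (h : y ∈ orb f d x) :
    zIter f.toEquiv j y ∈ orb f d (zIter f.toEquiv j x) := by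
  have := orb_subset f (x := x) (d := d)
    ((isClosed_orb f d (zIter f.toEquiv j x)).preimage (continuous_zIter f j)) (fun k => by
      rw [mem_preimage, zIter_zIter, add_comm, ← zIter_zIter]
      exact zIter_mem_orb_self f d k _)
  exact this h

lemma orb_zIter_mul (d k : ℤ) (x : X) : orb f d (zIter f.toEquiv (d * k) x) = orb f d x := by
  apply Subset.antisymm
  · refine orb_subset f (isClosed_orb f d x) fun l => ?_
    rw [zIter_zIter, ← mul_add]
    exact zIter_mem_orb_self f d _ x
  · refine orb_subset f (isClosed_orb f d _) fun l => ?_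
    have : d * l = d * (l - k) + d * k := by ring
    rw [this, ← zIter_zIter]
    exact zIter_mem_orb_self f d _ _

lemma zIter_mul_mem_orb {d : ℤ} {x y : X} (k : ℤ) (h : y ∈ orb f d x) :
    zIter f.toEquiv (d * k) y ∈ orb f d x := by
  simpa only [orb_zIter_mul] using zIter_mem_orb f (d * k) h

lemma orb_subset_orb {d : ℤ} {x y : X} (h : y ∈ orb f d x) : orb f d y ⊆ orb f d x :=
  orb_subset f (isClosed_orb f d x) fun k => zIter_mul_mem_orb f k h

lemma orb_subset_orb_one (d : ℤ) (x : X) : orb f d x ⊆ orb f 1 x :=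
  orb_subset f (isClosed_orb f 1 x) fun k => by
    simpa using zIter_mem_orb_self f 1 (d * k) x

/-- The orbit closure of a point is covered by the translates of any closed set which contains
the orbit of the point under a positive power. -/
lemma orb_one_subset_iUnion {m : ℕ} (hm : 0 < m) {v : X} {V : Set X} (hV : IsClosed V)
    (h : ∀ k : ℤ, zIter f.toEquiv (m * k) v ∈ V) :
    orb f 1 v ⊆ ⋃ j : Fin m, zIter f.toEquiv (-(j : ℕ) : ℤ) ⁻¹' V := by
  refine orb_subset f
    (isClosed_iUnion_of_finite fun j => hV.preimage (continuous_zIter f _)) fun k => ?_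
  have h0 : (0 : ℤ) ≤ k % m := Int.emod_nonneg _ (by omega)
  have h1 : k % m < m := Int.emod_lt_of_pos _ (by omega)
  refine mem_iUnion.2 ⟨⟨(k % m).toNat, by omega⟩, ?_⟩
  rw [mem_preimage, zIter_zIter]
  have e : -(((k % m).toNat : ℕ) : ℤ) + 1 * k = m * (k / m) := by
    have := Int.emod_add_mul_ediv k m
    rw [Int.toNat_of_nonneg h0]
    linarith
  simp only [e]
  exact h _

/-! ### Minimality for `f` and for its powers -/

/-- The orbit closure of a recurrent point is minimal. -/
lemma mem_orb_one_symm [RegularSpace X] {x y : X} (hrec : RecurrentPt f x)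
    (hy : y ∈ orb f 1 x) : x ∈ orb f 1 y := by
  by_contra hx
  obtain ⟨N, hN, hNc, hNs⟩ :=
    exists_mem_nhds_isClosed_subset ((isClosed_orb f 1 y).isOpen_compl.mem_nhds hx)
  obtain ⟨n, -, hn⟩ := hrec N hN
  -- By bounded gaps, finitely many closed preimages of `N` cover the orbit of `x`.
  have hcov : orb f 1 x ⊆ ⋃ j : Fin n, zIter f.toEquiv ((j : ℕ) : ℤ) ⁻¹' N := by
    refine orb_subset f
      (isClosed_iUnion_of_finite fun j => hNc.preimage (continuous_zIter f _)) fun k => ?_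
    obtain ⟨i, h1, h2, h3⟩ := hn k
    refine mem_iUnion.2 ⟨⟨(i - k).toNat, by omega⟩, ?_⟩
    rw [mem_preimage, zIter_zIter]
    have e : (((i - k).toNat : ℕ) : ℤ) + 1 * k = i := by omega
    simp only [e]
    exact h3
  obtain ⟨j, hj⟩ := mem_iUnion.1 (hcov hy)
  refine hNs hj ?_
  simpa using zIter_mem_orb_self f 1 ((j : ℕ) : ℤ) y

/-- The orbit closure of `x` under a power contains a minimal set of that power. -/
lemma exists_minimal_subset [CompactSpace X] (d : ℤ) (x : X) :
    ∃ V ⊆ orb f d x, V.Nonempty ∧ IsClosed V ∧ ∀ z ∈ V, orb f d z = V := by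
  let S : Set (Set X) :=
    {V | V.Nonempty ∧ IsClosed V ∧ ∀ z ∈ V, orb f d z ⊆ V}
  have hx : orb f d x ∈ S :=
    ⟨⟨x, mem_orb_self f d x⟩, isClosed_orb f d x, fun z hz => orb_subset_orb f hz⟩
  obtain ⟨V, hVx, hV⟩ := zorn_superset_nonempty S (by
    intro c hc hchain hne
    refine ⟨⋂₀ c, ⟨?_, isClosed_sInter fun s hs => (hc hs).2.1, ?_⟩,
      fun s hs => sInter_subset_of_mem hs⟩
    · have := hne.to_subtype
      rw [sInter_eq_iInter]
      refine IsCompact.nonempty_iInter_of_directed_nonempty_isCompact_isClosed _ ?_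
        (fun i => (hc i.2).1) (fun i => (hc i.2).2.1.isCompact) (fun i => (hc i.2).2.1)
      intro a b
      rcases hchain.total a.2 b.2 with h | h
      · exact ⟨a, subset_rfl, h⟩
      · exact ⟨b, h, subset_rfl⟩
    · exact fun z hz => subset_sInter fun s hs => (hc hs).2.2 z (hz s hs)) _ hx
  refine ⟨V, hVx, hV.prop.1, hV.prop.2.1, fun z hz => ?_⟩
  refine Subset.antisymm (hV.prop.2.2 z hz) (hV.2 ?_ (hV.prop.2.2 z hz))
  exact ⟨⟨z, mem_orb_self f d z⟩, isClosed_orb f d z, fun w hw => orb_subset_orb f hw⟩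

/-- The orbit closure of a recurrent point under a positive power is minimal for that power. -/
lemma mem_orb_symm [CompactSpace X] [T2Space X] {x z : X} (hrec : RecurrentPt f x)
    {m : ℕ} (hm : 0 < m) (hz : z ∈ orb f m x) : x ∈ orb f m z := by
  obtain ⟨V, hVx, ⟨v, hv⟩, hVc, hVm⟩ := exists_minimal_subset f m x
  have hxv : x ∈ orb f 1 v := mem_orb_one_symm f hrec (orb_subset_orb_one f m x (hVx hv))
  obtain ⟨j, hj⟩ := mem_iUnion.1 (orb_one_subset_iUnion f hm hVc
    (fun k => by rw [← hVm v hv]; exact zIter_mem_orb_self f m k v) hxv)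
  have hzV : zIter f.toEquiv (-(j : ℕ) : ℤ) z ∈ V := by
    rw [← hVm _ hj]
    exact zIter_mem_orb f _ hz
  have hjw := hj
  rw [mem_preimage, ← hVm _ hzV] at hjw
  simpa [zIter_zIter, zIter_zero] using zIter_mem_orb f ((j : ℕ) : ℤ) hjw

/-! ### Return times and the partition -/

/-- If `m` is the least positive integer with `T (m * k) x ∈ U` for all `k`, then all return
times of `x` to its orbit closure under `T m` are multiples of `m`. -/
lemma dvd_of_mem_orb [CompactSpace X] [T2Space X] {x : X} (hrec : RecurrentPt f x)
    {U : Set X} (hUc : IsClosed U) {m : ℕ} (hm : 0 < m)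
    (hmU : ∀ k : ℤ, zIter f.toEquiv (m * k) x ∈ U)
    (hmin : ∀ n : ℕ, 0 < n → (∀ k : ℤ, zIter f.toEquiv (n * k) x ∈ U) → m ≤ n)
    {d : ℤ} (hd : x ∈ orb f m (zIter f.toEquiv d x)) : (m : ℤ) ∣ d := by
  let D : AddSubgroup ℤ :=
    { carrier := {d | x ∈ orb f m (zIter f.toEquiv d x)}
      zero_mem' := by
        change x ∈ orb f m (zIter f.toEquiv 0 x)
        rw [zIter_zero]
        exact mem_orb_self f m x
      add_mem' := by
        intro a b ha hb
        have := zIter_mem_orb f a hb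
        rw [zIter_zIter] at this
        exact orb_subset_orb f this ha
      neg_mem' := by
        intro a ha
        have := zIter_mem_orb f (-a) ha
        rw [zIter_zIter, neg_add_cancel, zIter_zero] at this
        exact mem_orb_symm f hrec hm this }
  have hdD : d ∈ D := hd
  have hmD : (m : ℤ) ∈ D := by
    change x ∈ orb f m (zIter f.toEquiv m x)
    have := orb_zIter_mul f m 1 x
    rw [mul_one] at this
    rw [this]
    exact mem_orb_self f m x
  have hrD : d % m ∈ D := by
    have e : d % m = d - (d / m) • (m : ℤ) := by
      have := Int.emod_add_mul_ediv d m
      rw [smul_eq_mul]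
      linarith
    rw [e]
    exact D.sub_mem hdD (D.zsmul_mem hmD _)
  have h0 : (0 : ℤ) ≤ d % m := Int.emod_nonneg _ (by omega)
  have h1 : d % m < m := Int.emod_lt_of_pos _ (by omega)
  by_contra hnd
  have h2 : d % m ≠ 0 := fun h => hnd (Int.dvd_of_emod_eq_zero h)
  have := hmin (d % m).toNat (by omega) (fun k => by
    rw [Int.toNat_of_nonneg h0]
    have hk : (-k) • (d % m) ∈ D := D.zsmul_mem hrD _
    have hkr := zIter_mem_orb f (d % m * k) (show x ∈ orb f m _ from hk)
    have e : d % m * k + (-k) • (d % m) = 0 := by rw [smul_eq_mul]; ring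
    rw [zIter_zIter, e, zIter_zero] at hkr
    exact orb_subset f hUc hmU hkr)
  omega

end Helpers

/-- if `x` is recurrent and `U` is a closed neighborhood of `x` containing
`{f^{nk}(x) : k ∈ ℤ}` for some `n`, and `m` is the least such `n`, then the subsystem on
the orbit closure `C` of `x` admits a periodic partition of length `m` with
`x ∈ W 0` and `W 0 ⊆ U`. -/
theorem stmt6 {X : Type*} [TopologicalSpace X] [CompactSpace X] [T2Space X]
    (f : X ≃ₜ X) (x : X) (hrec : RecurrentPt f x)
    (U : Set X) (hU : U ∈ nhds x) (hUc : IsClosed U)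
    (hex : ∃ n : ℕ, 0 < n ∧ ∀ k : ℤ, zIter f.toEquiv ((n : ℤ) * k) x ∈ U)
    (C : Set X) (hC : C = closure (Set.range fun i : ℤ => zIter f.toEquiv i x))
    (m : ℕ) (hm : m = sInf {n : ℕ | 0 < n ∧ ∀ k : ℤ, zIter f.toEquiv ((n : ℤ) * k) x ∈ U}) :
    ∃ (hfC : Set.MapsTo (⇑f) C C) (W : ZMod m → Set C),
      IsPeriodicPartition (Set.MapsTo.restrict (⇑f) C C hfC) m W ∧
      ∃ hxC : x ∈ C, (⟨x, hxC⟩ : C) ∈ W 0 ∧ Subtype.val '' (W 0) ⊆ U := by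
  obtain ⟨hm0, hmU⟩ : 0 < m ∧ ∀ k : ℤ, zIter f.toEquiv ((m : ℤ) * k) x ∈ U := by
    rw [hm]
    exact Nat.sInf_mem hex
  have hmin : ∀ n : ℕ, 0 < n → (∀ k : ℤ, zIter f.toEquiv (n * k) x ∈ U) → m ≤ n :=
    fun n hn h => hm ▸ Nat.sInf_le ⟨hn, h⟩
  clear hm
  have hC1 : C = orb f 1 x := by simpa [orb] using hC
  clear hC
  subst hC1
  have : NeZero m := ⟨hm0.ne'⟩
  have hmap : ∀ j : ℤ, ∀ y ∈ orb f 1 x, zIter f.toEquiv j y ∈ orb f 1 x := fun j y hy => by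
    simpa using zIter_mul_mem_orb f j hy
  have hfC : Set.MapsTo f (orb f 1 x) (orb f 1 x) := fun y hy => by
    simpa [zIter_one] using hmap 1 y hy
  -- The integer representative of a residue does not matter.
  have hP : ∀ k l : ℤ, (k : ZMod m) = l →
      orb f m (zIter f.toEquiv k x) = orb f m (zIter f.toEquiv l x) := by
    intro k l h
    obtain ⟨q, hq⟩ := (ZMod.intCast_eq_intCast_iff_dvd_sub _ _ _).1 h
    have e : l = m * q + k := by linarith
    rw [e, ← zIter_zIter, orb_zIter_mul]
  have hdisj : ∀ (k l : ℤ) (y : X), y ∈ orb f m (zIter f.toEquiv k x) →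
      y ∈ orb f m (zIter f.toEquiv l x) → (k : ZMod m) = l := by
    intro k l y hk hl
    have h1 := zIter_mem_orb f (-k) hk
    have h2 := zIter_mem_orb f (-k) hl
    rw [zIter_zIter, neg_add_cancel, zIter_zero] at h1
    rw [zIter_zIter] at h2
    have h3 := orb_subset_orb f h2 (mem_orb_symm f hrec hm0 h1)
    have h4 := dvd_of_mem_orb f hrec hUc hm0 hmU hmin h3
    rw [ZMod.intCast_eq_intCast_iff_dvd_sub]
    rwa [neg_add_eq_sub] at h4
  let r : ZMod m → ℤ := fun i => (i.val : ℤ)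
  have hr : ∀ i, ((r i : ℤ) : ZMod m) = i := fun i => by simp [r]
  let W : ZMod m → Set (orb f 1 x) := fun i => {c | c.1 ∈ orb f m (zIter f.toEquiv (r i) x)}
  have hWc : ∀ i, IsClosed (W i) := fun i => (isClosed_orb f m _).preimage continuous_subtype_val
  have hWd : Pairwise fun i j => Disjoint (W i) (W j) := by
    intro i j hij
    refine Set.disjoint_left.2 fun c hi hj => hij ?_
    rw [← hr i, ← hr j]
    exact hdisj _ _ _ hi hj
  have hWu : (⋃ i, W i) = Set.univ := by
    refine eq_univ_of_forall fun c => ?_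
    obtain ⟨j, hj⟩ := mem_iUnion.1 (orb_one_subset_iUnion f hm0 (isClosed_orb f m x)
      (fun k => zIter_mem_orb_self f m k x) c.2)
    refine mem_iUnion.2 ⟨((j : ℕ) : ZMod m), ?_⟩
    have := zIter_mem_orb f ((j : ℕ) : ℤ) hj
    rw [zIter_zIter, add_neg_cancel, zIter_zero] at this
    change c.1 ∈ orb f m _
    rwa [hP _ ((j : ℕ) : ℤ) (by rw [hr]; simp)]
  have hx0 : orb f m (zIter f.toEquiv (r 0) x) = orb f m x := by
    rw [hP _ 0 (by rw [hr]; simp), zIter_zero]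
  refine ⟨hfC, W, ⟨hm0, fun i => ⟨hWc i, ?_⟩, fun i => ?_, hWd, hWu⟩, mem_orb_self f 1 x, ?_, ?_⟩
  · have e : W i = (⋃ j : {j // j ≠ i}, W j)ᶜ := by
      ext c
      constructor
      · intro hc h
        obtain ⟨j, hj⟩ := mem_iUnion.1 h
        exact Set.disjoint_left.1 (hWd j.2) hj hc
      · intro hc
        obtain ⟨j, hj⟩ := mem_iUnion.1 (hWu ▸ mem_univ c : c ∈ ⋃ i, W i)
        by_contra hci
        exact hc (mem_iUnion.2 ⟨⟨j, fun h => hci (h ▸ hj)⟩, hj⟩)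
    rw [e]
    exact (isClosed_iUnion_of_finite fun j => hWc _).isOpen_compl
  · have e : orb f m (zIter f.toEquiv (r (i + 1)) x) = orb f m (zIter f.toEquiv (1 + r i) x) :=
      hP _ _ (by rw [Int.cast_add, hr, hr, Int.cast_one, add_comm])
    ext c
    change c.1 ∈ orb f m (zIter f.toEquiv (r (i + 1)) x) ↔ _
    rw [e]
    constructor
    · intro hc
      have h1 := zIter_mem_orb f (-1) hc
      rw [zIter_zIter, neg_add_cancel_left] at h1
      refine ⟨⟨zIter f.toEquiv (-1) c.1, hmap _ _ c.2⟩, h1, Subtype.ext ?_⟩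
      change f (zIter f.toEquiv (-1) c.1) = c.1
      rw [← zIter_one f, zIter_zIter, add_neg_cancel, zIter_zero]
    · rintro ⟨b, hb, rfl⟩
      have h1 := zIter_mem_orb f 1 hb
      rw [zIter_zIter, zIter_one] at h1
      exact h1
  · change x ∈ orb f m _
    rw [hx0]
    exact mem_orb_self f m x
  · rintro _ ⟨c, hc, rfl⟩
    change c.1 ∈ orb f m _ at hc
    rw [hx0] at hc
    exact orb_subset f hUc hmU hc
end

section
/- (1) For every ultranatural number N ∈ Σ there exists an odometer (A, g) with Φ(Per(A, g)) = N. (2) Two odometers (A1, g1) and (A2, g2) are topologically conjugate if and only if Φ(Per(A1, g1)) = Φ(Per(A2, g2)). -/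
/-!
The heart of the matter is that `m` is a period of the odometer on `(n i)` iff `m` divides some
`n i` (`mem_periods_odometer`). Reducing the `i`-th coordinate modulo such an `m` gives a periodic
partition. Conversely, the piece `W r` of a periodic partition that contains `0` is open, so it
contains a cylinder `{a | a i = 0}`; the orbit of `0` returns to this cylinder after `n i` steps,
but after `n i` steps it lies in `W (r + n i)`, so `n i = 0` modulo `m`. Consequently
`k ≤ Phi (Per) p` iff `p ^ k` divides some `n i` (`natCast_le_Phi_odometer`), and an
ultranatural number is determined by the natural numbers below its values.

For the realization of `N`, the sequence of running least common multiples of all positive integers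
dividing `N` works: its terms divide `N`, and every `p ^ k` with `k ≤ N p` divides one of them.

A conjugacy transports periodic partitions, so it preserves the invariant. If the invariants of
two odometers agree, then every `n₁ i` divides some `n₂ j` and vice versa, by splitting into
prime powers (`exists_dvd_of_Phi_le`). Reduction of coordinates then gives continuous equivariant
maps in both directions, which are mutually inverse because the residue modulo `m` of a point does
not depend on the coordinate from which it is computed (`castHom_coord_eq`).
-/

open Set Function

/-! ### Periods of an odometer -/

section Odometer

variable {n : ℕ → ℕ} {hd : ∀ i, n i ∣ n (i + 1)}

lemma dvd_of_chain (hd : ∀ i, n i ∣ n (i + 1)) {j k : ℕ} (hjk : j ≤ k) : n j ∣ n k := by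
  induction k, hjk using Nat.le_induction with
  | base => exact dvd_rfl
  | succ k _ ih => exact ih.trans (hd k)

/-- Lower coordinates of a point of the odometer are reductions of higher ones. -/
lemma castHom_coord (a : OdometerCarrier n hd) {j k : ℕ} (hjk : j ≤ k) (h : n j ∣ n k) :
    ZMod.castHom h (ZMod (n j)) (a.1 k) = a.1 j := by
  induction k, hjk using Nat.le_induction with
  | base => simp
  | succ k hjk ih =>
    rw [← ih (dvd_of_chain hd hjk), ← a.2 k, ← RingHom.comp_apply]
    exact congrArg (fun φ : ZMod (n (k + 1)) →+* ZMod (n j) => φ (a.1 (k + 1)))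
      (RingHom.ext_zmod _ _)

/-- The residue modulo `m` of a point of the odometer does not depend on the coordinate
used to compute it. -/
lemma castHom_coord_eq (a : OdometerCarrier n hd) {m j k : ℕ} (hj : m ∣ n j) (hk : m ∣ n k) :
    ZMod.castHom hj (ZMod m) (a.1 j) = ZMod.castHom hk (ZMod m) (a.1 k) := by
  wlog hjk : j ≤ k generalizing j k
  · exact (this hk hj (le_of_not_ge hjk)).symm
  rw [← castHom_coord a hjk (dvd_of_chain hd hjk), ← RingHom.comp_apply]
  exact congrArg (fun φ : ZMod (n k) →+* ZMod m => φ (a.1 k)) (RingHom.ext_zmod _ _)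

/-- The cylinders `{b | b i = a i}` form a neighbourhood basis at `a`. -/
lemma exists_cylinder_subset {U : Set (OdometerCarrier n hd)} (hU : IsOpen U)
    {a : OdometerCarrier n hd} (ha : a ∈ U) : ∃ i, ∀ b : OdometerCarrier n hd,
      b.1 i = a.1 i → b ∈ U := by
  obtain ⟨V, hV, rfl⟩ := isOpen_induced_iff.1 hU
  obtain ⟨I, u, hu, hIV⟩ := isOpen_pi_iff.1 hV a.1 ha
  refine ⟨I.sup id, fun b hb => hIV fun k hk => ?_⟩
  have hle : k ≤ I.sup id := Finset.le_sup (f := id) hk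
  have hdv := dvd_of_chain hd hle
  rw [← castHom_coord b hle hdv, hb, castHom_coord a hle hdv]
  exact (hu k hk).2

lemma odometerAdd_iterate_coord (a : OdometerCarrier n hd) (t i : ℕ) :
    ((odometerAdd n hd)^[t] a).1 i = a.1 i + t := by
  induction t with
  | zero => simp
  | succ t ih =>
    rw [Function.iterate_succ_apply']
    change ((odometerAdd n hd)^[t] a).1 i + 1 = _
    rw [ih]; push_cast; ring

lemma odometerAdd_surjective : Function.Surjective (odometerAdd n hd) := fun a =>
  ⟨⟨fun i => a.1 i - 1, fun i => by rw [map_sub, map_one, a.2 i]⟩,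
    Subtype.ext (funext fun i => sub_add_cancel (a.1 i) 1)⟩

/-- The periods of an odometer are exactly the divisors of the terms of its sequence. -/
lemma mem_periods_odometer (hn : ∀ i, 0 < n i) (m : ℕ) :
    m ∈ Periods (odometerAdd n hd) ↔ ∃ i, m ∣ n i := by
  constructor
  · rintro ⟨W, -, hcl, hW, hdis, hcov⟩
    let z : OdometerCarrier n hd := ⟨fun _ => 0, fun i => map_zero _⟩
    obtain ⟨r, hr⟩ := mem_iUnion.1 (hcov ▸ mem_univ z)
    obtain ⟨i, hi⟩ := exists_cylinder_subset (hcl r).isOpen hr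
    have hit : ∀ t : ℕ, (odometerAdd n hd)^[t] z ∈ W (r + t) := by
      intro t
      induction t with
      | zero => simpa using hr
      | succ t ih =>
        rw [Function.iterate_succ_apply', Nat.cast_succ, ← add_assoc, hW]
        exact mem_image_of_mem _ ih
    -- After `n i` steps the orbit of `0` is back in the cylinder around `0`, hence in `W r`.
    have hback : (odometerAdd n hd)^[n i] z ∈ W r :=
      hi _ (by rw [odometerAdd_iterate_coord]; simp)
    refine ⟨i, (ZMod.natCast_eq_zero_iff _ _).1 ?_⟩
    by_contra hne
    exact disjoint_left.1 (hdis (i := r + (n i : ZMod m)) (j := r) (by simpa using hne))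
      (hit (n i)) hback
  · rintro ⟨i, hi⟩
    have hc : Continuous fun a : OdometerCarrier n hd => ZMod.castHom hi (ZMod m) (a.1 i) :=
      (continuous_of_discreteTopology (f := ZMod.castHom hi (ZMod m))).comp
        ((continuous_apply i).comp continuous_subtype_val)
    refine ⟨fun r => {a | ZMod.castHom hi (ZMod m) (a.1 i) = r},
      Nat.pos_of_dvd_of_pos hi (hn i), fun r => (isClopen_discrete {r}).preimage hc, ?_, ?_, ?_⟩
    · intro r
      have hstep : ∀ a : OdometerCarrier n hd,
          ZMod.castHom hi (ZMod m) ((odometerAdd n hd a).1 i)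
            = ZMod.castHom hi (ZMod m) (a.1 i) + 1 := fun a => by
        rw [← map_one (ZMod.castHom hi (ZMod m)), ← map_add]; rfl
      ext b
      constructor
      · intro hb
        obtain ⟨a, rfl⟩ := odometerAdd_surjective b
        exact ⟨a, add_right_cancel ((hstep a).symm.trans hb), rfl⟩
      · rintro ⟨a, ha, rfl⟩
        exact (hstep a).trans (congrArg (· + 1) ha)
    · exact fun r s hrs => disjoint_left.2 fun a ha hb => hrs (ha.symm.trans hb)
    · exact eq_univ_of_forall fun a => mem_iUnion.2 ⟨_, rfl⟩

end Odometer

/-! ### The ultranatural number of an odometer -/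

/-- The supremum defining `Phi` is attained at every finite level: `p ^ k` divides an element
of `A` iff `k ≤ Phi A p`. -/
lemma natCast_le_Phi {A : Set ℕ} (hA : A.Nonempty) (p : Nat.Primes) (k : ℕ) :
    (k : ℕ∞) ≤ Phi A p ↔ ∃ a ∈ A, (p : ℕ) ^ k ∣ a := by
  constructor
  · intro h
    rcases k with _ | k
    · obtain ⟨a, ha⟩ := hA
      exact ⟨a, ha, by simp⟩
    have hlt : (k : ℕ∞) < Phi A p := lt_of_lt_of_le (by exact_mod_cast k.lt_succ_self) h
    obtain ⟨l, hl⟩ := lt_iSup_iff.1 hlt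
    obtain ⟨⟨a, ha, hdvd⟩, hl⟩ := lt_iSup_iff.1 hl
    have hkl : k < l := by exact_mod_cast hl
    exact ⟨a, ha, (pow_dvd_pow _ hkl).trans hdvd⟩
  · exact fun h => le_iSup₂ (f := fun (k : ℕ) (_ : k ∈ {k : ℕ | ∃ a ∈ A, (p : ℕ) ^ k ∣ a}) =>
      (k : ℕ∞)) k h

lemma natCast_le_Phi_odometer {n : ℕ → ℕ} {hd : ∀ i, n i ∣ n (i + 1)} (hn : ∀ i, 0 < n i)
    (p : Nat.Primes) (k : ℕ) :
    (k : ℕ∞) ≤ Phi (Periods (odometerAdd n hd)) p ↔ ∃ i, (p : ℕ) ^ k ∣ n i := by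
  rw [natCast_le_Phi ⟨n 0, (mem_periods_odometer hn _).2 ⟨0, dvd_rfl⟩⟩]
  constructor
  · rintro ⟨a, ha, hk⟩
    obtain ⟨i, hi⟩ := (mem_periods_odometer hn a).1 ha
    exact ⟨i, hk.trans hi⟩
  · rintro ⟨i, hi⟩
    exact ⟨n i, (mem_periods_odometer hn _).2 ⟨i, dvd_rfl⟩, hi⟩

/-- A number divides a term of a divisibility chain as soon as each of its prime power divisors
does. -/
lemma exists_dvd_of_prime_pow {n : ℕ → ℕ} (hd : ∀ i, n i ∣ n (i + 1)) (m : ℕ) (hm : 0 < m)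
    (h : ∀ p k : ℕ, p.Prime → p ^ k ∣ m → ∃ i, p ^ k ∣ n i) : ∃ i, m ∣ n i := by
  induction m using Nat.recOnPosPrimePosCoprime with
  | prime_pow p k hp _ => exact h p k hp dvd_rfl
  | zero => exact absurd hm (lt_irrefl 0)
  | one => exact ⟨0, one_dvd _⟩
  | coprime a b ha hb hab iha ihb =>
    obtain ⟨i, hi⟩ := iha (by omega) fun p k hp hk => h p k hp (hk.mul_right b)
    obtain ⟨j, hj⟩ := ihb (by omega) fun p k hp hk => h p k hp (hk.mul_left a)
    exact ⟨max i j, hab.mul_dvd_of_dvd_of_dvd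
      (hi.trans (dvd_of_chain hd (le_max_left i j)))
      (hj.trans (dvd_of_chain hd (le_max_right i j)))⟩

lemma exists_dvd_of_Phi_le {n₁ n₂ : ℕ → ℕ} {hd₁ : ∀ i, n₁ i ∣ n₁ (i + 1)}
    {hd₂ : ∀ i, n₂ i ∣ n₂ (i + 1)} (hn₁ : ∀ i, 0 < n₁ i) (hn₂ : ∀ i, 0 < n₂ i)
    (h : Phi (Periods (odometerAdd n₁ hd₁)) ≤ Phi (Periods (odometerAdd n₂ hd₂))) (i : ℕ) :
    ∃ j, n₁ i ∣ n₂ j :=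
  exists_dvd_of_prime_pow hd₂ _ (hn₁ i) fun p k hp hk =>
    (natCast_le_Phi_odometer hn₂ ⟨p, hp⟩ k).1
      (((natCast_le_Phi_odometer hn₁ ⟨p, hp⟩ k).2 ⟨i, hk⟩).trans (h _))

/-! ### Conjugacies between odometers -/

section Factor

variable {n₁ n₂ : ℕ → ℕ} {hd₁ : ∀ i, n₁ i ∣ n₁ (i + 1)} {hd₂ : ∀ i, n₂ i ∣ n₂ (i + 1)}

/-- If every `n₁ i` divides some `n₂ (j i)`, reducing the coordinate `j i` modulo `n₁ i` defines
a map from the odometer on `n₂` to the odometer on `n₁`. -/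
def odometerFactor (hd₁ : ∀ i, n₁ i ∣ n₁ (i + 1)) (hd₂ : ∀ i, n₂ i ∣ n₂ (i + 1))
    (j : ℕ → ℕ) (hj : ∀ i, n₁ i ∣ n₂ (j i)) (b : OdometerCarrier n₂ hd₂) :
    OdometerCarrier n₁ hd₁ :=
  ⟨fun i => ZMod.castHom (hj i) (ZMod (n₁ i)) (b.1 (j i)), fun i => by
    beta_reduce
    rw [castHom_coord_eq b (hj i) ((hd₁ i).trans (hj (i + 1))), ← RingHom.comp_apply]
    exact congrArg (fun φ : ZMod (n₂ (j (i + 1))) →+* ZMod (n₁ i) => φ (b.1 (j (i + 1))))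
      (RingHom.ext_zmod _ _)⟩

lemma continuous_odometerFactor (j : ℕ → ℕ) (hj : ∀ i, n₁ i ∣ n₂ (j i)) :
    Continuous (odometerFactor hd₁ hd₂ j hj) :=
  Continuous.subtype_mk (continuous_pi fun i =>
    (continuous_of_discreteTopology (f := ZMod.castHom (hj i) (ZMod (n₁ i)))).comp
      ((continuous_apply (j i)).comp continuous_subtype_val)) _

lemma odometerFactor_odometerAdd (j : ℕ → ℕ) (hj : ∀ i, n₁ i ∣ n₂ (j i))
    (b : OdometerCarrier n₂ hd₂) :
    odometerFactor hd₁ hd₂ j hj (odometerAdd n₂ hd₂ b)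
      = odometerAdd n₁ hd₁ (odometerFactor hd₁ hd₂ j hj b) := by
  apply Subtype.ext
  funext i
  change ZMod.castHom (hj i) (ZMod (n₁ i)) (b.1 (j i) + 1)
    = ZMod.castHom (hj i) (ZMod (n₁ i)) (b.1 (j i)) + 1
  rw [map_add, map_one]

lemma odometerFactor_odometerFactor (j : ℕ → ℕ) (hj : ∀ i, n₁ i ∣ n₂ (j i))
    (k : ℕ → ℕ) (hk : ∀ i, n₂ i ∣ n₁ (k i)) (b : OdometerCarrier n₂ hd₂) :
    odometerFactor hd₂ hd₁ k hk (odometerFactor hd₁ hd₂ j hj b) = b := by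
  apply Subtype.ext
  funext i
  change ZMod.castHom (hk i) (ZMod (n₂ i))
    (ZMod.castHom (hj (k i)) (ZMod (n₁ (k i))) (b.1 (j (k i)))) = b.1 i
  have h : ZMod.castHom (dvd_refl (n₂ i)) (ZMod (n₂ i)) (b.1 i) = b.1 i := by simp
  rw [← h, castHom_coord_eq b (dvd_refl (n₂ i)) ((hk i).trans (hj (k i))),
    ← RingHom.comp_apply]
  exact congrArg (fun φ : ZMod (n₂ (j (k i))) →+* ZMod (n₂ i) => φ (b.1 (j (k i))))
    (RingHom.ext_zmod _ _)

end Factor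

/-- The set of periods is invariant under topological conjugacy. -/
lemma periods_subset_of_conj {X Y : Type*} [TopologicalSpace X] [TopologicalSpace Y]
    {f : X → X} {g : Y → Y} (h : X ≃ₜ Y) (hfg : ∀ a, h (f a) = g (h a)) :
    Periods f ⊆ Periods g := by
  rintro m ⟨W, hm, hcl, hW, hdis, hcov⟩
  refine ⟨fun i => h '' W i, hm, fun i => ?_, fun i => ?_, fun i j hij => ?_, ?_⟩
  · exact ⟨h.isClosed_image.2 (hcl i).1, h.isOpen_image.2 (hcl i).2⟩
  · simp only [hW i, image_image, hfg]
  · exact (disjoint_image_iff h.injective).2 (hdis hij)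
  · rw [← image_iUnion, hcov, image_univ, h.surjective.range_eq]

/-! ### Realizing an ultranatural number -/

/-- `m` is a positive integer dividing the ultranatural number `N`, i.e. every prime power
`p ^ k` dividing `m` satisfies `k ≤ N p`. -/
def DividesUltranat (N : Ultranat) (m : ℕ) : Prop :=
  0 < m ∧ ∀ (p : Nat.Primes) (k : ℕ), (p : ℕ) ^ k ∣ m → (k : ℕ∞) ≤ N p

lemma DividesUltranat.lcm {N : Ultranat} {a b : ℕ} (ha : DividesUltranat N a)
    (hb : DividesUltranat N b) : DividesUltranat N (Nat.lcm a b) := by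
  refine ⟨Nat.lcm_pos ha.1 hb.1, fun p k hk => ?_⟩
  rw [p.2.pow_dvd_iff_le_factorization (Nat.lcm_pos ha.1 hb.1).ne',
    Nat.factorization_lcm ha.1.ne' hb.1.ne', Finsupp.sup_apply, le_sup_iff,
    ← p.2.pow_dvd_iff_le_factorization ha.1.ne',
    ← p.2.pow_dvd_iff_le_factorization hb.1.ne'] at hk
  exact hk.elim (ha.2 p k) (hb.2 p k)

lemma dividesUltranat_pow {N : Ultranat} {p : Nat.Primes} {k : ℕ} (h : (k : ℕ∞) ≤ N p) :
    DividesUltranat N ((p : ℕ) ^ k) := by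
  refine ⟨pow_pos p.2.pos k, fun q l hl => ?_⟩
  rcases Nat.eq_zero_or_pos l with rfl | hl0
  · simp
  have hqp : q = p := Subtype.ext ((Nat.prime_dvd_prime_iff_eq q.2 p.2).1
    (q.2.dvd_of_dvd_pow ((dvd_pow_self _ hl0.ne').trans hl)))
  subst hqp
  exact le_trans (by exact_mod_cast (Nat.pow_dvd_pow_iff_le_right q.2.one_lt).1 hl) h

open Classical in
/-- The running least common multiple of the divisors of `N` below `i`. -/
noncomputable def lcmSeq (N : Ultranat) : ℕ → ℕ
  | 0 => 1
  | i + 1 => if DividesUltranat N i then Nat.lcm (lcmSeq N i) i else lcmSeq N i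

lemma lcmSeq_dvd_succ (N : Ultranat) (i : ℕ) : lcmSeq N i ∣ lcmSeq N (i + 1) := by
  rw [lcmSeq]
  split_ifs
  · exact Nat.dvd_lcm_left _ _
  · exact dvd_rfl

lemma dividesUltranat_lcmSeq (N : Ultranat) (i : ℕ) : DividesUltranat N (lcmSeq N i) := by
  induction i with
  | zero =>
    refine ⟨one_pos, fun p k hk => ?_⟩
    have hk0 : k = 0 := by
      by_contra hne
      exact p.2.one_lt.ne' (Nat.dvd_one.1 ((dvd_pow_self _ hne).trans hk))
    simp [hk0]
  | succ i ih =>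
    rw [lcmSeq]
    split_ifs with h
    · exact ih.lcm h
    · exact ih

lemma exists_pow_dvd_lcmSeq (N : Ultranat) (p : Nat.Primes) (k : ℕ) :
    (∃ i, (p : ℕ) ^ k ∣ lcmSeq N i) ↔ (k : ℕ∞) ≤ N p := by
  constructor
  · rintro ⟨i, hi⟩
    exact (dividesUltranat_lcmSeq N i).2 p k hi
  · intro h
    refine ⟨(p : ℕ) ^ k + 1, ?_⟩
    rw [lcmSeq, if_pos (dividesUltranat_pow h)]
    exact Nat.dvd_lcm_right _ _

/-- (1) every ultranatural number `N` is realized as `Phi (Per (A, g))`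
for some odometer `(A, g)`; (2) two odometers are topologically conjugate iff their
`Phi ∘ Per` invariants coincide. -/
theorem stmt13 :
    (∀ N : Ultranat, ∃ (n : ℕ → ℕ) (hd : ∀ i, n i ∣ n (i + 1)),
      (∀ i, 0 < n i) ∧ Phi (Periods (odometerAdd n hd)) = N) ∧
    (∀ (n₁ : ℕ → ℕ) (hd₁ : ∀ i, n₁ i ∣ n₁ (i + 1)) (_ : ∀ i, 0 < n₁ i)
       (n₂ : ℕ → ℕ) (hd₂ : ∀ i, n₂ i ∣ n₂ (i + 1)) (_ : ∀ i, 0 < n₂ i),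
      (∃ h : OdometerCarrier n₁ hd₁ ≃ₜ OdometerCarrier n₂ hd₂,
          ∀ a, h (odometerAdd n₁ hd₁ a) = odometerAdd n₂ hd₂ (h a)) ↔
        Phi (Periods (odometerAdd n₁ hd₁)) = Phi (Periods (odometerAdd n₂ hd₂))) := by
  refine ⟨fun N => ⟨lcmSeq N, lcmSeq_dvd_succ N, fun i => (dividesUltranat_lcmSeq N i).1, ?_⟩,
    fun n₁ hd₁ hn₁ n₂ hd₂ hn₂ => ⟨?_, fun h => ?_⟩⟩
  · funext p
    refine ENat.eq_of_forall_natCast_le_iff fun k => ?_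
    rw [natCast_le_Phi_odometer fun i => (dividesUltranat_lcmSeq N i).1, exists_pow_dvd_lcmSeq]
  · rintro ⟨h, hh⟩
    refine congrArg Phi (Subset.antisymm (periods_subset_of_conj h hh)
      (periods_subset_of_conj h.symm fun b => ?_))
    rw [h.symm_apply_eq, hh, h.apply_symm_apply]
  · choose j hj using exists_dvd_of_Phi_le hn₁ hn₂ h.le
    choose k hk using exists_dvd_of_Phi_le hn₂ hn₁ h.ge
    exact ⟨{ toFun := odometerFactor hd₂ hd₁ k hk
             invFun := odometerFactor hd₁ hd₂ j hj
             left_inv := odometerFactor_odometerFactor k hk j hj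
             right_inv := odometerFactor_odometerFactor j hj k hk
             continuous_toFun := continuous_odometerFactor k hk
             continuous_invFun := continuous_odometerFactor j hj },
      odometerFactor_odometerAdd k hk⟩
end

section
/- Let (Γ, f) be a minimal dynamical system whose phase space Γ is a Cantor set (with any metric inducing its topology). Then the following conditions are equivalent: (1) (Γ, f) is topologically conjugate to an odometer; (2) (Γ, f) is distal; (3) (Γ, f) is equicontinuous. -/
/-!
The cycle proved is odometer ⟹ equicontinuous ⟹ distal ⟹ odometer.

The first two implications are soft. On an odometer each coordinate difference is invariant under the
translation, and by compactness a single coordinate controls distances up to `ε`; an equicontinuous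
homeomorphism is distal because orbits can be run backwards.

The implication distal ⟹ odometer has three steps.

* Ellis' argument (`distal_recurrence`): the pointwise closure of `{f ^ n : n ≥ 1}` in `X → X` is a
  compact right topological semigroup, so it contains an idempotent `u`. As `u x` and `u (u x)`
  coincide, `x` and `u x` are proximal, so distality forces `u = id`. Therefore `f ^ n`, `n ≥ 1`,
  accumulates pointwise at the identity, and two points whose `U`-itineraries agree at all positive
  times agree at time `0`, for every clopen `U`.
* Hence the relation "same two-sided `U`-itinerary" is open (`isOpen_sameItin`). By compactness there
  is `N` such that agreement on `[0, N)` implies agreement at time `-1`, hence at all times `< N`, and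
  the recurrence statement for `f⁻¹` gives agreement at all times. This is the familiar fact that an
  infinite subshift has asymptotic pairs, so that a distal one is finite.
* Intersecting these relations over a countable clopen basis gives a decreasing sequence of open
  invariant equivalence relations `R k` whose intersection is the diagonal. The quotient by `R k` is
  finite and, by density of orbits, is a single cycle, that is `ZMod (n k)` with `x ↦ x + 1`; the
  inverse limit of these cycles is the odometer conjugate to `f` (`exists_odometer`).
-/


open Set Function

section Helpers

open Filter Topology

/-- Integer iterates of a homeomorphism computed in `Equiv.Perm X` and in `X ≃ₜ X` agree. -/
lemma zIter_eq {X : Type*} [TopologicalSpace X] (f : X ≃ₜ X) (i : ℤ) :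
    zIter f.toEquiv i = ⇑(f ^ i : X ≃ₜ X) := by
  let φ : (X ≃ₜ X) →* Equiv.Perm X :=
    { toFun := fun g => g.toEquiv, map_one' := rfl, map_mul' := fun _ _ => rfl }
  have h : φ (f ^ i) = (φ f) ^ i := map_zpow φ f i
  change ⇑((φ f) ^ i) = _
  rw [← h]
  rfl

lemma zpow_add_apply {X : Type*} [TopologicalSpace X] (f : X ≃ₜ X) (i j : ℤ) (x : X) :
    (f ^ (i + j)) x = (f ^ i) ((f ^ j) x) := by
  rw [zpow_add]; rfl

lemma zpow_zero_apply {X : Type*} [TopologicalSpace X] (f : X ≃ₜ X) (x : X) :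
    (f ^ (0 : ℤ)) x = x := by
  rw [zpow_zero]; rfl

lemma zpow_one_apply {X : Type*} [TopologicalSpace X] (f : X ≃ₜ X) (x : X) :
    (f ^ (1 : ℤ)) x = f x := by
  rw [zpow_one]

/-- Distality, phrased with the powers of `f` in the group of homeomorphisms. -/
def Distal {X : Type*} [MetricSpace X] (f : X ≃ₜ X) : Prop :=
  ∀ x y : X, x ≠ y → ∃ δ > (0 : ℝ), ∀ i : ℤ, δ < dist ((f ^ i) x) ((f ^ i) y)

lemma Distal.inv {X : Type*} [MetricSpace X] {f : X ≃ₜ X} (hf : Distal f) : Distal f⁻¹ := by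
  intro x y hxy
  obtain ⟨δ, hδ, h⟩ := hf x y hxy
  refine ⟨δ, hδ, fun i => ?_⟩
  have := h (-i)
  rwa [zpow_neg, ← inv_zpow] at this

/-! ### Recurrence in distal systems -/

/-- In a distal system the identity is a pointwise limit of positive iterates. -/
lemma id_mem_closure {X : Type*} [MetricSpace X] [CompactSpace X] {f : X ≃ₜ X} (hf : Distal f) :
    (id : X → X) ∈ closure (Set.range fun n : ℕ => (⇑(f ^ ((n : ℤ) + 1)) : X → X)) := by
  set F : ℕ → X → X := fun n => ⇑(f ^ ((n : ℤ) + 1)) with hF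
  set S : Set (X → X) := closure (Set.range F) with hS
  have hFS : ∀ n, F n ∈ S := fun n => subset_closure ⟨n, rfl⟩
  have hclosed : IsClosed S := isClosed_closure
  have hFc : ∀ n, Continuous (F n) := fun n => (f ^ ((n : ℤ) + 1)).continuous
  have hFF : ∀ n m, F n ∘ F m = F (n + m + 1) := by
    intro n m
    funext x
    simp only [hF, Function.comp]
    rw [← zpow_add_apply]
    congr 2
    push_cast; ring
  have h1 : ∀ n, ∀ q ∈ S, F n ∘ q ∈ S := by
    intro n q hq
    have hc : IsClosed {g : X → X | F n ∘ g ∈ S} :=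
      hclosed.preimage (continuous_pi fun x => (hFc n).comp (continuous_apply x))
    refine closure_minimal ?_ hc hq
    rintro _ ⟨m, rfl⟩
    change F n ∘ F m ∈ S
    rw [hFF]; exact hFS _
  have h2 : ∀ p ∈ S, ∀ q ∈ S, p ∘ q ∈ S := by
    intro p hp q hq
    have hc : IsClosed {g : X → X | g ∘ q ∈ S} :=
      hclosed.preimage (continuous_pi fun x => continuous_apply (q x))
    refine closure_minimal ?_ hc hp
    rintro _ ⟨m, rfl⟩
    exact h1 m q hq
  let _ : Semigroup (X → X) := { mul := fun p q => p ∘ q, mul_assoc := fun _ _ _ => rfl }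
  obtain ⟨u, huS, huu⟩ := exists_idempotent_in_compact_subsemigroup (M := X → X)
    (fun r => continuous_pi fun x => continuous_apply (r x)) S ⟨_, hFS 0⟩ hclosed.isCompact h2
  have huu' : ∀ x, u (u x) = u x := fun x => congrFun huu x
  have hu : u = id := by
    funext x
    by_contra hx
    obtain ⟨δ, hδ, h⟩ := hf x (u x) (fun e => hx e.symm)
    have hc : IsClosed {g : X → X | δ ≤ dist (g x) (g (u x))} :=
      isClosed_le continuous_const ((continuous_apply x).dist (continuous_apply (u x)))
    have : u ∈ {g : X → X | δ ≤ dist (g x) (g (u x))} := by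
      refine closure_minimal ?_ hc huS
      rintro _ ⟨m, rfl⟩
      exact (h _).le
    simp only [Set.mem_ofPred_eq, huu', dist_self] at this
    linarith
  exact hu ▸ huS

/-- The set of pairs lying on the same side of a clopen set is clopen. -/
lemma isClopen_sameSide {Y X : Type*} [TopologicalSpace X] [TopologicalSpace Y] {U : Set X}
    (hU : IsClopen U) {a b : Y → X} (ha : Continuous a) (hb : Continuous b) :
    IsClopen {p | a p ∈ U ↔ b p ∈ U} := by
  have e : {p | a p ∈ U ↔ b p ∈ U} =
      ((a ⁻¹' U) ∩ (b ⁻¹' U)) ∪ ((a ⁻¹' U)ᶜ ∩ (b ⁻¹' U)ᶜ) := by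
    ext p
    simp only [Set.mem_ofPred_eq, Set.mem_union, Set.mem_inter_iff, Set.mem_preimage,
      Set.mem_compl_iff]
    tauto
  rw [e]
  have h1 := hU.preimage ha
  have h2 := hU.preimage hb
  exact (h1.inter h2).union (h1.compl.inter h2.compl)

/-- A distal system has no pair of points that are asymptotic as seen through a clopen set. -/
lemma distal_recurrence {X : Type*} [MetricSpace X] [CompactSpace X] {f : X ≃ₜ X} (hf : Distal f)
    {U : Set X} (hU : IsClopen U) (x y : X)
    (h : ∀ n : ℤ, 1 ≤ n → ((f ^ n) x ∈ U ↔ (f ^ n) y ∈ U)) : x ∈ U ↔ y ∈ U := by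
  have hc : IsClosed {g : X → X | g x ∈ U ↔ g y ∈ U} :=
    (isClopen_sameSide hU (continuous_apply x) (continuous_apply y)).isClosed
  refine closure_minimal ?_ hc (id_mem_closure hf)
  rintro _ ⟨m, rfl⟩
  exact h _ (by omega)

/-! ### Openness of the itinerary relation -/

/-- `x` and `y` have the same two-sided itinerary with respect to `U`. -/
def SameItin {X : Type*} [TopologicalSpace X] (f : X ≃ₜ X) (U : Set X) (x y : X) : Prop :=
  ∀ n : ℤ, (f ^ n) x ∈ U ↔ (f ^ n) y ∈ U

/-- Agreement of itineraries on a long enough finite window already forces agreement at all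
times. -/
lemma isOpen_sameItin {X : Type*} [MetricSpace X] [CompactSpace X] {f : X ≃ₜ X} (hf : Distal f)
    {U : Set X} (hU : IsClopen U) : IsOpen {p : X × X | SameItin f U p.1 p.2} := by
  set A : ℤ → Set (X × X) := fun n => {p | (f ^ n) p.1 ∈ U ↔ (f ^ n) p.2 ∈ U} with hA
  have hAc : ∀ n, IsClopen (A n) := fun n =>
    isClopen_sameSide hU ((f ^ n).continuous.comp continuous_fst)
      ((f ^ n).continuous.comp continuous_snd)
  obtain ⟨t, ht⟩ := isCompact_univ.elim_finite_subfamily_closed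
    (fun n : ℕ => A n ∩ (A (-1))ᶜ)
    (fun n => (hAc n).isClosed.inter (hAc (-1)).compl.isClosed) (by
      rw [Set.eq_empty_iff_forall_notMem]
      rintro ⟨x, y⟩ ⟨-, hp⟩
      rw [Set.mem_iInter] at hp
      refine (hp 0).2 (distal_recurrence hf hU _ _ fun n hn => ?_)
      change (f ^ n) ((f ^ (-1 : ℤ)) x) ∈ U ↔ (f ^ n) ((f ^ (-1 : ℤ)) y) ∈ U
      rw [← zpow_add_apply, ← zpow_add_apply]
      obtain ⟨k, hk⟩ := Int.eq_ofNat_of_zero_le (show 0 ≤ n + -1 by omega)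
      rw [hk]
      exact (hp k).1)
  obtain ⟨N, hN⟩ := t.exists_nat_subset_range
  have key : ∀ x y : X, (∀ n : ℤ, 0 ≤ n → n < N + 1 → ((f ^ n) x ∈ U ↔ (f ^ n) y ∈ U)) →
      ((f ^ (-1 : ℤ)) x ∈ U ↔ (f ^ (-1 : ℤ)) y ∈ U) := by
    intro x y h
    by_contra hne
    have : ((x, y) : X × X) ∈ (∅ : Set (X × X)) := by
      rw [← ht]
      refine ⟨trivial, Set.mem_iInter₂.2 fun n hn => ⟨h n (by omega) ?_, hne⟩⟩
      have := Finset.mem_range.1 (hN hn)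
      omega
    exact this
  have e : {p : X × X | SameItin f U p.1 p.2} = ⋂ n ∈ Finset.range (N + 1), A n := by
    ext ⟨x, y⟩
    simp only [Set.mem_iInter, Finset.mem_range, Set.mem_ofPred_eq]
    refine ⟨fun h n _ => h n, fun h => ?_⟩
    -- agreement on the window propagates backwards one step at a time
    have back : ∀ k : ℕ, ∀ n : ℤ, -(k : ℤ) ≤ n → n < N + 1 →
        ((f ^ n) x ∈ U ↔ (f ^ n) y ∈ U) := by
      intro k
      induction k with
      | zero =>
        intro n h0 h1
        obtain ⟨j, rfl⟩ := Int.eq_ofNat_of_zero_le (show 0 ≤ n by simpa using h0)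
        exact h j (by omega)
      | succ k ih =>
        intro n h0 h1
        by_cases hn : -(k : ℤ) ≤ n
        · exact ih n hn h1
        · have hn' : n = -1 + -(k : ℤ) := by push_cast at h0; omega
          rw [hn', zpow_add_apply, zpow_add_apply]
          refine key _ _ fun m hm0 hm1 => ?_
          rw [← zpow_add_apply, ← zpow_add_apply]
          exact ih _ (by omega) (by omega)
    -- recurrence of the inverse system propagates the agreement forwards
    have fwd : ∀ k : ℕ, ∀ n : ℤ, n ≤ k → ((f ^ n) x ∈ U ↔ (f ^ n) y ∈ U) := by
      intro k
      induction k with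
      | zero => intro n hn; exact back n.natAbs n (by omega) (by push_cast at hn; omega)
      | succ k ih =>
        intro n hn
        refine distal_recurrence hf.inv hU _ _ fun m hm => ?_
        rw [inv_zpow, ← zpow_neg, ← zpow_add_apply, ← zpow_add_apply]
        exact ih _ (by push_cast at hn; omega)
    exact fun n => fwd n.natAbs n (by omega)
  rw [e]
  exact isOpen_biInter_finset fun n _ => (hAc n).isOpen

/-! ### From invariant open equivalence relations to an odometer -/

/-- A decreasing sequence of open invariant equivalence relations with trivial intersection
exhibits a system with dense orbits as an odometer. -/
lemma exists_odometer {X : Type*} [TopologicalSpace X] [CompactSpace X] [Nonempty X] (f : X ≃ₜ X)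
    (hdense : ∀ (x : X) (V : Set X), IsOpen V → V.Nonempty → ∃ n : ℤ, (f ^ n) x ∈ V)
    (R : ℕ → X → X → Prop) (hR : ∀ k, Equivalence (R k))
    (hdec : ∀ k x y, R (k + 1) x y → R k x y)
    (hinv : ∀ k x y, R k x y → ∀ n : ℤ, R k ((f ^ n) x) ((f ^ n) y))
    (hopen : ∀ k, IsOpen {p : X × X | R k p.1 p.2})
    (hsep : ∀ x y, (∀ k, R k x y) → x = y) :
    ∃ (n : ℕ → ℕ) (hd : ∀ i, n i ∣ n (i + 1)), (∀ i, 0 < n i) ∧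
        ∃ h : X ≃ₜ OdometerCarrier n hd, ∀ x, h (f x) = odometerAdd n hd (h x) := by
  obtain ⟨x0⟩ := ‹Nonempty X›
  have hcls : ∀ k x, IsOpen {y | R k x y} := fun k x =>
    (hopen k).preimage (Continuous.prodMk continuous_const continuous_id)
  have hreach : ∀ k x, ∃ m : ℤ, R k x ((f ^ m) x0) := fun k x =>
    hdense x0 _ (hcls k x) ⟨x, (hR k).refl x⟩
  have hshift : ∀ k (a b : ℤ), R k ((f ^ a) x0) ((f ^ b) x0) ↔ R k ((f ^ (b - a)) x0) x0 := by
    intro k a b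
    constructor
    · intro h
      have := hinv k _ _ h (-a)
      rw [← zpow_add_apply, ← zpow_add_apply, neg_add_cancel, zpow_zero_apply] at this
      rw [sub_eq_neg_add]
      exact (hR k).symm this
    · intro h
      have := hinv k _ _ h a
      rw [← zpow_add_apply, add_sub_cancel] at this
      exact (hR k).symm this
  -- the return times of `x0` to its `R k`-class form a subgroup `n ℤ` with `0 < n`
  have hper : ∀ k, ∃ n : ℕ, 0 < n ∧ ∀ m : ℤ, R k ((f ^ m) x0) x0 ↔ (n : ℤ) ∣ m := by
    intro k
    let H : AddSubgroup ℤ :=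
      { carrier := {m | R k ((f ^ m) x0) x0}
        zero_mem' := by
          change R k ((f ^ (0 : ℤ)) x0) x0
          rw [zpow_zero_apply]; exact (hR k).refl _
        add_mem' := by
          intro a b ha hb
          change R k ((f ^ (a + b)) x0) x0
          rw [zpow_add_apply]
          exact (hR k).trans (hinv k _ _ hb a) ha
        neg_mem' := by
          intro a ha
          change R k ((f ^ (-a)) x0) x0
          have := hinv k _ _ ha (-a)
          rw [← zpow_add_apply, neg_add_cancel, zpow_zero_apply] at this
          exact (hR k).symm this }
    obtain ⟨a, ha⟩ := Int.subgroup_cyclic H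
    have hmem : ∀ m : ℤ, R k ((f ^ m) x0) x0 ↔ a ∣ m := by
      intro m
      change m ∈ H ↔ _
      rw [ha, ← AddSubgroup.zmultiples_eq_closure, Int.mem_zmultiples_iff]
    refine ⟨a.natAbs, ?_, fun m => by rw [hmem, Int.natAbs_dvd]⟩
    -- the orbit of `x0` accumulates somewhere, so it returns to some class
    obtain ⟨z, hz⟩ := exists_clusterPt_of_compactSpace
      (Filter.map (fun n : ℕ => (f ^ (n : ℤ)) x0) atTop)
    have hz' : MapClusterPt z atTop (fun n : ℕ => (f ^ (n : ℤ)) x0) := hz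
    have hfr := hz'.frequently ((hcls k z).mem_nhds ((hR k).refl z))
    obtain ⟨p, -, hp⟩ := Filter.frequently_atTop.1 hfr 0
    obtain ⟨q, hq', hq⟩ := Filter.frequently_atTop.1 hfr (p + 1)
    have hd := (hmem _).1 ((hshift k _ _).1 ((hR k).trans ((hR k).symm hp) hq))
    rw [Int.natAbs_pos]
    rintro rfl
    rw [zero_dvd_iff] at hd
    omega
  choose n hnpos hn using hper
  have hd : ∀ i, n i ∣ n (i + 1) := fun i => by
    have := hdec i _ _ ((hn (i + 1) (n (i + 1))).2 dvd_rfl)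
    exact_mod_cast (hn i _).1 this
  choose m hm using fun x k => hreach k x
  have hchar : ∀ x k (j : ℤ), ((m x k : ℤ) : ZMod (n k)) = (j : ZMod (n k)) ↔
      R k x ((f ^ j) x0) := by
    intro x k j
    rw [ZMod.intCast_eq_intCast_iff_dvd_sub, ← hn, ← hshift]
    exact ⟨fun h => (hR k).trans (hm x k) h, fun h => (hR k).trans ((hR k).symm (hm x k)) h⟩
  have hcompat : ∀ x i, ZMod.castHom (hd i) (ZMod (n i)) ((m x (i + 1) : ℤ) : ZMod (n (i + 1))) =
      ((m x i : ℤ) : ZMod (n i)) := by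
    intro x i
    rw [map_intCast, eq_comm, hchar]
    exact hdec _ _ _ (hm x (i + 1))
  let h : X → OdometerCarrier n hd := fun x => ⟨fun k => ((m x k : ℤ) : ZMod (n k)), hcompat x⟩
  have hh : ∀ x k (j : ℤ), (h x).1 k = (j : ZMod (n k)) ↔ R k x ((f ^ j) x0) := hchar
  have hlc : ∀ x y k, R k x y → (h x).1 k = (h y).1 k := by
    intro x y k hxy
    exact (hh x k _).2 ((hR k).trans hxy (hm y k))
  have hcont : Continuous h := by
    refine Continuous.subtype_mk (continuous_pi fun k => ?_) _
    refine (IsLocallyConstant.iff_exists_open _).2 (fun x => ?_) |>.continuous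
    exact ⟨_, hcls k x, (hR k).refl x, fun y hy => (hlc x y k hy).symm⟩
  have hinj : Function.Injective h := by
    intro x y hxy
    refine hsep x y fun k => ?_
    have : (h x).1 k = ((m y k : ℤ) : ZMod (n k)) := by rw [hxy]
    exact (hR k).trans ((hh x k _).1 this) ((hR k).symm (hm y k))
  have hsurj : Function.Surjective h := by
    intro a
    have hdown : ∀ x k, (h x).1 (k + 1) = a.1 (k + 1) → (h x).1 k = a.1 k := by
      intro x k e
      rw [← (h x).2 k, ← a.2 k, e]
    obtain ⟨x, hx⟩ := IsCompact.nonempty_iInter_of_sequence_nonempty_isCompact_isClosed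
      (fun k => {x | (h x).1 k = a.1 k})
      (fun k x hx => hdown x k hx)
      (fun k => by
        obtain ⟨j, hj⟩ := ZMod.intCast_surjective (a.1 k)
        refine ⟨(f ^ j) x0, ?_⟩
        change (h _).1 k = a.1 k
        rw [← hj, hh]
        exact (hR k).refl _)
      (isClosed_eq ((continuous_apply 0).comp (continuous_subtype_val.comp hcont))
        continuous_const).isCompact
      (fun k => isClosed_eq ((continuous_apply k).comp (continuous_subtype_val.comp hcont))
        continuous_const)
    exact ⟨x, Subtype.ext (funext fun k => Set.mem_iInter.1 hx k)⟩
  refine ⟨n, hd, hnpos, Continuous.homeoOfEquivCompactToT2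
    (f := Equiv.ofBijective h ⟨hinj, hsurj⟩) hcont, fun x => ?_⟩
  refine Subtype.ext (funext fun k => ?_)
  change (h (f x)).1 k = (m x k : ZMod (n k)) + 1
  have : ((m x k : ℤ) : ZMod (n k)) + 1 = ((1 + m x k : ℤ) : ZMod (n k)) := by
    push_cast; ring
  rw [this, hh, zpow_add_apply]
  have := hinv k _ _ (hm x k) 1
  rwa [zpow_one_apply f x] at this

/-! ### Dense orbits and the three implications -/

lemma dense_orbits {X : Type*} [TopologicalSpace X] (f : X ≃ₜ X)
    (hmin : ∀ K : Set X, K.Nonempty → IsClosed K → ⇑f '' K = K → K = Set.univ)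
    (x : X) (V : Set X) (hV : IsOpen V) (hne : V.Nonempty) : ∃ n : ℤ, (f ^ n) x ∈ V := by
  have himg : ⇑f '' Set.range (fun n : ℤ => (f ^ n) x) = Set.range (fun n : ℤ => (f ^ n) x) := by
    ext y
    constructor
    · rintro ⟨_, ⟨n, rfl⟩, rfl⟩
      refine ⟨1 + n, ?_⟩
      change (f ^ (1 + n)) x = _
      rw [zpow_add_apply, zpow_one_apply]
    · rintro ⟨n, rfl⟩
      refine ⟨_, ⟨n - 1, rfl⟩, ?_⟩
      change f ((f ^ (n - 1)) x) = (f ^ n) x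
      rw [← zpow_one_apply f ((f ^ (n - 1)) x), ← zpow_add_apply, add_sub_cancel]
  have := hmin (closure (Set.range fun n : ℤ => (f ^ n) x)) ⟨x, subset_closure ⟨0, rfl⟩⟩
    isClosed_closure (by rw [f.image_closure, himg])
  obtain ⟨_, hy, n, rfl⟩ := (dense_iff_closure_eq.2 this).inter_open_nonempty V hV hne
  exact ⟨n, hy⟩

lemma odometer_of_distal {X : Type*} [MetricSpace X] [CompactSpace X] [Nonempty X]
    [TotallyDisconnectedSpace X] (f : X ≃ₜ X)
    (hmin : ∀ K : Set X, K.Nonempty → IsClosed K → ⇑f '' K = K → K = Set.univ)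
    (hf : Distal f) :
    ∃ (n : ℕ → ℕ) (hd : ∀ i, n i ∣ n (i + 1)), (∀ i, 0 < n i) ∧
        ∃ h : X ≃ₜ OdometerCarrier n hd, ∀ x, h (f x) = odometerAdd n hd (h x) := by
  obtain ⟨B, hBsub, hBc, hB⟩ :=
    (loc_compact_Haus_tot_disc_of_zero_dim (H := X)).exists_countable
  have hBne : B.Nonempty := by
    obtain ⟨x⟩ := ‹Nonempty X›
    obtain ⟨U, hU, -⟩ := hB.exists_subset_of_mem_open (Set.mem_univ x) isOpen_univ
    exact ⟨U, hU⟩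
  obtain ⟨U, hU⟩ := hBc.exists_eq_range hBne
  have hUc : ∀ j, IsClopen (U j) := fun j => hBsub (hU ▸ Set.mem_range_self j)
  refine exists_odometer f (dense_orbits f hmin) (fun k x y => ∀ j ≤ k, SameItin f (U j) x y)
    (fun k => ⟨fun x j _ n => Iff.rfl, fun h j hj n => (h j hj n).symm,
      fun h h' j hj n => (h j hj n).trans (h' j hj n)⟩)
    (fun k x y h j hj => h j (by omega)) ?_ ?_ ?_
  · intro k x y h n j hj i
    rw [← zpow_add_apply, ← zpow_add_apply]
    exact h j hj _
  · intro k
    have e : {p : X × X | ∀ j ≤ k, SameItin f (U j) p.1 p.2} =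
        ⋂ j ∈ Finset.range (k + 1), {p : X × X | SameItin f (U j) p.1 p.2} := by
      ext p
      simp
    rw [e]
    exact isOpen_biInter_finset fun j _ => isOpen_sameItin hf (hUc j)
  · intro x y h
    by_contra hne
    obtain ⟨V, hV, hxV, hVy⟩ := hB.exists_subset_of_mem_open
      (show x ∈ ({y}ᶜ : Set X) from hne) isOpen_compl_singleton
    rw [hU] at hV
    obtain ⟨j, rfl⟩ := hV
    have := h j j le_rfl 0
    rw [zpow_zero_apply, zpow_zero_apply] at this
    exact hVy (this.1 hxV) rfl

lemma equicontinuous_of_odometer {X : Type*} [MetricSpace X] [CompactSpace X] (f : X ≃ₜ X)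
    (n : ℕ → ℕ) (hd : ∀ i, n i ∣ n (i + 1))
    (h : X ≃ₜ OdometerCarrier n hd) (hh : ∀ x, h (f x) = odometerAdd n hd (h x))
    (ε : ℝ) (hε : 0 < ε) : ∃ δ > (0 : ℝ), ∀ x y : X, dist x y < δ →
      ∀ i : ℤ, dist ((f ^ i) x) ((f ^ i) y) < ε := by
  have hc : ∀ k, Continuous fun x => (h x).1 k := fun k =>
    (continuous_apply k).comp (continuous_subtype_val.comp h.continuous)
  have hstep : ∀ x k, (h (f x)).1 k = (h x).1 k + 1 := fun x k => by rw [hh]; rfl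
  have hinv : ∀ k (i : ℤ) x, (h ((f ^ i) x)).1 k = (h x).1 k + i := by
    intro k i x
    induction i with
    | zero => rw [zpow_zero_apply]; simp
    | succ i ih =>
      rw [add_comm, zpow_add_apply, zpow_one_apply, hstep, ih]
      push_cast; ring
    | pred i ih =>
      have := hstep ((f ^ (-(i : ℤ) - 1)) x) k
      rw [← zpow_one_apply f ((f ^ (-(i : ℤ) - 1)) x), ← zpow_add_apply, add_sub_cancel, ih] at this
      rw [← sub_eq_iff_eq_add] at this
      rw [← this]
      push_cast; ring
  have hmono : ∀ x y (i j : ℕ), i ≤ j → (h x).1 j = (h y).1 j → (h x).1 i = (h y).1 i := by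
    intro x y i j hij
    induction hij with
    | refl => exact id
    | step _ ih =>
      intro e
      refine ih ?_
      rw [← (h x).2, ← (h y).2, e]
  -- one coordinate suffices to separate all pairs at distance at least `ε`
  obtain ⟨k, hk⟩ : ∃ k, ∀ x y, (h x).1 k = (h y).1 k → dist x y < ε := by
    have hclosed : ∀ k, IsClosed {p : X × X | (h p.1).1 k = (h p.2).1 k ∧ ε ≤ dist p.1 p.2} :=
      fun k => (isClosed_eq ((hc k).comp continuous_fst) ((hc k).comp continuous_snd)).inter
        (isClosed_le continuous_const continuous_dist)
    by_contra! hcon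
    obtain ⟨p, hp⟩ := IsCompact.nonempty_iInter_of_sequence_nonempty_isCompact_isClosed
      (fun k => {p : X × X | (h p.1).1 k = (h p.2).1 k ∧ ε ≤ dist p.1 p.2})
      (fun k p hp => ⟨hmono _ _ k (k + 1) (by omega) hp.1, hp.2⟩)
      (fun k => by
        obtain ⟨x, y, hxy⟩ := hcon k
        exact ⟨(x, y), hxy⟩)
      (hclosed 0).isCompact hclosed
    rw [Set.mem_iInter] at hp
    have : p.1 = p.2 := h.injective (Subtype.ext (funext fun k => (hp k).1))
    have h2 := (hp 0).2
    rw [this, dist_self] at h2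
    linarith
  have huc : IsOpen {p : X × X | (h p.1).1 k = (h p.2).1 k} := by
    have hpre : IsOpen ((fun p : X × X => ((h p.1).1 k, (h p.2).1 k)) ⁻¹'
        {q : ZMod (n k) × ZMod (n k) | q.1 = q.2}) :=
      (isOpen_discrete _).preimage
        (((hc k).comp continuous_fst).prodMk ((hc k).comp continuous_snd))
    exact hpre
  have hU : {p : X × X | (h p.1).1 k = (h p.2).1 k} ∈ uniformity X := by
    rw [← nhdsSet_diagonal_eq_uniformity]
    refine huc.mem_nhdsSet.2 ?_
    rintro ⟨x, y⟩ hxy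
    rw [Set.mem_diagonal_iff] at hxy
    change (h x).1 k = (h y).1 k
    exact congrArg (fun z => (h z).1 k) hxy
  obtain ⟨δ, hδ, hδU⟩ := Metric.mem_uniformity_dist.1 hU
  refine ⟨δ, hδ, fun x y hxy i => hk _ _ ?_⟩
  rw [hinv, hinv]
  have : (h x).1 k = (h y).1 k := hδU hxy
  rw [this]

lemma distal_of_equicontinuous {X : Type*} [MetricSpace X] (f : X ≃ₜ X)
    (hf : ∀ ε > (0 : ℝ), ∃ δ > (0 : ℝ), ∀ x y : X, dist x y < δ →
      ∀ i : ℤ, dist ((f ^ i) x) ((f ^ i) y) < ε) : Distal f := by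
  intro x y hxy
  obtain ⟨δ, hδ, h⟩ := hf (dist x y) (dist_pos.2 hxy)
  refine ⟨δ / 2, half_pos hδ, fun i => ?_⟩
  by_contra! hle
  have := h _ _ (hle.trans_lt (half_lt_self hδ)) (-i)
  rw [← zpow_add_apply, ← zpow_add_apply, neg_add_cancel, zpow_zero_apply, zpow_zero_apply] at this
  exact lt_irrefl _ this

end Helpers

/-- for a minimal dynamical system `(Γ, f)` on a Cantor set
(nonempty compact metric, perfect, totally disconnected), the following are
equivalent: conjugacy to an odometer, distality, equicontinuity. -/
theorem stmt14 {X : Type*} [MetricSpace X] [CompactSpace X] [Nonempty X]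
    [TotallyDisconnectedSpace X] (hperf : Perfect (Set.univ : Set X))
    (f : X ≃ₜ X)
    (hmin : ∀ K : Set X, K.Nonempty → IsClosed K → ⇑f '' K = K → K = Set.univ) :
    ((∃ (n : ℕ → ℕ) (hd : ∀ i, n i ∣ n (i + 1)),
        (∀ i, 0 < n i) ∧
        ∃ h : X ≃ₜ OdometerCarrier n hd, ∀ x, h (f x) = odometerAdd n hd (h x)) ↔
      (∀ x y : X, x ≠ y → ∃ δ > (0 : ℝ), ∀ i : ℤ,
        δ < dist (zIter f.toEquiv i x) (zIter f.toEquiv i y))) ∧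
    ((∀ x y : X, x ≠ y → ∃ δ > (0 : ℝ), ∀ i : ℤ,
        δ < dist (zIter f.toEquiv i x) (zIter f.toEquiv i y)) ↔
      (∀ ε > (0 : ℝ), ∃ δ > (0 : ℝ), ∀ x y : X, dist x y < δ →
        ∀ i : ℤ, dist (zIter f.toEquiv i x) (zIter f.toEquiv i y) < ε)) := by
  simp only [zIter_eq]
  have h12 := odometer_of_distal f hmin
  have h31 := distal_of_equicontinuous f
  refine ⟨⟨?_, h12⟩, ⟨fun h => ?_, h31⟩⟩
  · rintro ⟨n, hd, -, h, hh⟩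
    exact h31 (equicontinuous_of_odometer f n hd h hh)
  · obtain ⟨n, hd, -, k, hk⟩ := h12 h
    exact equicontinuous_of_odometer f n hd k hk
end

section
/- Let (A, g) be an odometer and let h : (A, g) → (A, g) be a morphism (a continuous map h : A → A with h ∘ g = g ∘ h). Then h is an isomorphism, i.e. h is a homeomorphism of A onto itself. -/
/-!
The orbit of `0` under translation by `e = (1, 1, 1, …)` is dense: a point `a` of the odometer is
the limit of `k_j • e`, where `k_j` is the representative in `ℕ` of the coordinate `a j`.
A continuous map `h` commuting with the translation satisfies `h (k • e) = k • e + h 0`, so passing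
to the limit gives `h a = a + h 0` for every `a`. Thus `h` is itself a translation, with
continuous inverse `b ↦ b - h 0`.
-/


open Set Function

/-- The coordinates of a point of the inverse limit are determined by any later coordinate. -/
lemma odometer_cast_val {n : ℕ → ℕ} (hpos : ∀ i, 0 < n i) {hd : ∀ i, n i ∣ n (i + 1)}
    (a : OdometerCarrier n hd) {i j : ℕ} (hij : i ≤ j) :
    (((a.1 j).val : ℕ) : ZMod (n i)) = a.1 i := by
  induction j, hij using Nat.le_induction with
  | base =>
    have : NeZero (n i) := ⟨(hpos i).ne'⟩
    exact ZMod.natCast_zmod_val _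
  | succ j hij ih =>
    have : NeZero (n j) := ⟨(hpos j).ne'⟩
    have : NeZero (n (j + 1)) := ⟨(hpos (j + 1)).ne'⟩
    have hdvd : n i ∣ n j := Nat.le_induction (dvd_refl _) (fun k _ hk => hk.trans (hd k)) j hij
    rw [← ih, ← a.2 j, ZMod.castHom_apply, ZMod.cast_eq_val, ZMod.val_natCast,
      ZMod.natCast_eq_natCast_iff]
    exact ((Nat.mod_modEq _ _).of_dvd hdvd).symm

lemma odometerAdd_iterate_apply {n : ℕ → ℕ} {hd : ∀ i, n i ∣ n (i + 1)} (k : ℕ)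
    (a : OdometerCarrier n hd) (i : ℕ) :
    ((odometerAdd n hd)^[k] a).1 i = a.1 i + k := by
  induction k with
  | zero => simp
  | succ k ih =>
    rw [Function.iterate_succ_apply']
    change ((odometerAdd n hd)^[k] a).1 i + 1 = _
    rw [ih]; push_cast; ring

/-- Iterating the odometer map `(a j).val` times on `c` converges to `c + a` as `j → ∞`. -/
lemma tendsto_odometerAdd_iterate {n : ℕ → ℕ} (hpos : ∀ i, 0 < n i)
    {hd : ∀ i, n i ∣ n (i + 1)} (a c s : OdometerCarrier n hd)
    (hs : ∀ i, s.1 i = c.1 i + a.1 i) :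
    Filter.Tendsto (fun j => (odometerAdd n hd)^[(a.1 j).val] c) Filter.atTop (nhds s) := by
  rw [tendsto_subtype_rng, tendsto_pi_nhds]
  intro i
  refine tendsto_const_nhds.congr' ?_
  filter_upwards [Filter.eventually_ge_atTop i] with j hij
  rw [odometerAdd_iterate_apply, odometer_cast_val hpos a hij, hs]

/-- every endomorphism of an odometer is an isomorphism. -/
theorem stmt15 (n : ℕ → ℕ) (hpos : ∀ i, 0 < n i) (hd : ∀ i, n i ∣ n (i + 1))
    (h : OdometerCarrier n hd → OdometerCarrier n hd) (hc : Continuous h)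
    (hcomm : ∀ a, h (odometerAdd n hd a) = odometerAdd n hd (h a)) :
    IsHomeomorph h := by
  let z : OdometerCarrier n hd := ⟨fun _ => 0, fun i => map_zero _⟩
  have key : ∀ a i, (h a).1 i = (h z).1 i + a.1 i := by
    intro a
    let s : OdometerCarrier n hd :=
      ⟨fun i => (h z).1 i + a.1 i, fun i => by rw [map_add, (h z).2 i, a.2 i]⟩
    have h1 := (hc.tendsto a).comp
      (tendsto_odometerAdd_iterate hpos a z a fun i => (zero_add _).symm)
    have h2 := tendsto_odometerAdd_iterate hpos a (h z) s fun i => rfl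
    have hsemi : Function.Semiconj h (odometerAdd n hd) (odometerAdd n hd) := hcomm
    have h3 : h a = s := tendsto_nhds_unique
      (h1.congr fun j => (hsemi.iterate_right _).eq z) h2
    intro i
    rw [h3]
  let g : OdometerCarrier n hd → OdometerCarrier n hd := fun b =>
    ⟨fun i => b.1 i - (h z).1 i, fun i => by rw [map_sub, (h z).2 i, b.2 i]⟩
  have hg : Continuous g := by
    refine Continuous.subtype_mk (continuous_pi fun i => ?_) _
    exact (continuous_of_discreteTopology (f := fun x : ZMod (n i) => x - (h z).1 i)).comp
      ((continuous_apply i).comp continuous_subtype_val)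
  refine isHomeomorph_iff_exists_inverse.2 ⟨hc, g, fun a => ?_, fun b => ?_, hg⟩
  · refine Subtype.ext (funext fun i => ?_)
    change (h a).1 i - (h z).1 i = a.1 i
    rw [key, add_sub_cancel_left]
  · refine Subtype.ext (funext fun i => ?_)
    rw [key]
    exact add_sub_cancel _ _
end

section
/- Let (A, g) be a dynamical system topologically conjugate to an odometer. Then for every pair of points x, y ∈ A there exists exactly one morphism h : (A, g) → (A, g) with h(x) = y, and this morphism is an isomorphism (a homeomorphism). -/
/-!
Every point of an odometer has a dense forward orbit: to approximate `b` from `a`, apply the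
translation by `1` as many times as the residue of `b i - a i` in `ZMod (n i)`, and let `i` grow.
Hence two continuous self-maps commuting with the dynamics that agree at one point agree
everywhere, which gives uniqueness. Existence, and the fact that the morphism is a homeomorphism,
come from the group structure: for points `a`, `b` of the odometer, translation by `b - a` is a
homeomorphism commuting with translation by `(1, 1, 1, …)` and sending `a` to `b`. Both facts are
carried over to the given system along the conjugacy.
-/

open Set Function

open Filter Topology

namespace Odometer

variable {n : ℕ → ℕ} {hd : ∀ i, n i ∣ n (i + 1)}

/-- Translation of the odometer by `b - a`, as a homeomorphism; it sends `a` to `b`. -/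
def translate (a b : OdometerCarrier n hd) : OdometerCarrier n hd ≃ₜ OdometerCarrier n hd where
  toFun c := ⟨fun i => c.1 i + (b.1 i - a.1 i), fun i => by
    rw [map_add, map_sub, a.2 i, b.2 i, c.2 i]⟩
  invFun c := ⟨fun i => c.1 i - (b.1 i - a.1 i), fun i => by
    rw [map_sub, map_sub, a.2 i, b.2 i, c.2 i]⟩
  left_inv c := Subtype.ext (funext fun i => by simp)
  right_inv c := Subtype.ext (funext fun i => by simp)
  continuous_toFun := Continuous.subtype_mk (continuous_pi fun i =>
    (continuous_of_discreteTopology (f := fun z : ZMod (n i) => z + (b.1 i - a.1 i))).comp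
      ((continuous_apply i).comp continuous_subtype_val)) _
  continuous_invFun := Continuous.subtype_mk (continuous_pi fun i =>
    (continuous_of_discreteTopology (f := fun z : ZMod (n i) => z - (b.1 i - a.1 i))).comp
      ((continuous_apply i).comp continuous_subtype_val)) _

theorem translate_apply_self (a b : OdometerCarrier n hd) : translate a b a = b :=
  Subtype.ext (funext fun i => add_sub_cancel (a.1 i) (b.1 i))

theorem translate_odometerAdd (a b c : OdometerCarrier n hd) :
    translate a b (odometerAdd n hd c) = odometerAdd n hd (translate a b c) :=
  Subtype.ext (funext fun i => add_right_comm (c.1 i) 1 (b.1 i - a.1 i))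

theorem iterate_odometerAdd_val (a : OdometerCarrier n hd) (k i : ℕ) :
    ((odometerAdd n hd)^[k] a).1 i = a.1 i + k := by
  induction k with
  | zero => simp
  | succ k ih =>
    rw [iterate_succ_apply']
    change ((odometerAdd n hd)^[k] a).1 i + 1 = _
    rw [ih, Nat.cast_succ, add_assoc]

/-- Each coordinate of a point of the inverse limit determines the earlier ones. -/
theorem val_eq_of_le {a b : OdometerCarrier n hd} {i j : ℕ} (hij : j ≤ i)
    (h : a.1 i = b.1 i) : a.1 j = b.1 j := by
  induction i, hij using Nat.le_induction with
  | base => exact h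
  | succ i _ ih => exact ih (by rw [← a.2 i, ← b.2 i, h])

/-- Every forward orbit is dense, in sequential form. -/
theorem exists_tendsto_iterate (hn : ∀ i, 0 < n i) (a b : OdometerCarrier n hd) :
    ∃ k : ℕ → ℕ, Tendsto (fun i => (odometerAdd n hd)^[k i] a) atTop (𝓝 b) := by
  refine ⟨fun i => (b.1 i - a.1 i).val, ?_⟩
  rw [tendsto_subtype_rng, tendsto_pi_nhds]
  intro j
  refine tendsto_const_nhds.congr' ?_
  filter_upwards [eventually_ge_atTop j] with i hij
  refine (val_eq_of_le hij ?_).symm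
  have : NeZero (n i) := ⟨(hn i).ne'⟩
  rw [iterate_odometerAdd_val, ZMod.natCast_zmod_val, add_sub_cancel]

end Odometer

/-- if `(A, g)` is topologically conjugate to an odometer, then for all
`x, y ∈ A` there is exactly one morphism `h : (A, g) → (A, g)` with `h x = y`, and it
is an isomorphism. -/
theorem stmt16 {A : Type*} [TopologicalSpace A] [CompactSpace A] [T2Space A]
    (g : A ≃ₜ A)
    (hconj : ∃ (n : ℕ → ℕ) (hd : ∀ i, n i ∣ n (i + 1)),
      (∀ i, 0 < n i) ∧ ∃ h : A ≃ₜ OdometerCarrier n hd,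
        ∀ a, h (g a) = odometerAdd n hd (h a))
    (x y : A) :
    ∃ h : A → A,
      (Continuous h ∧ (∀ a, h (g a) = g (h a)) ∧ h x = y ∧ IsHomeomorph h) ∧
      ∀ h' : A → A, Continuous h' → (∀ a, h' (g a) = g (h' a)) → h' x = y → h' = h := by
  obtain ⟨n, hd, hn, e, he⟩ := hconj
  let t := Odometer.translate (e x) (e y)
  have he' : ∀ b, e.symm (odometerAdd n hd b) = g (e.symm b) := fun b => by
    rw [e.symm_apply_eq, he, e.apply_symm_apply]
  have hcomm : ∀ a, ((e.trans t).trans e.symm) (g a) = g (((e.trans t).trans e.symm) a) := by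
    intro a
    simp only [Homeomorph.trans_apply]
    rw [he, Odometer.translate_odometerAdd, he']
  have hxy : ((e.trans t).trans e.symm) x = y := by
    simp [t, Odometer.translate_apply_self]
  refine ⟨(e.trans t).trans e.symm, ⟨Homeomorph.continuous _, hcomm, hxy,
    Homeomorph.isHomeomorph _⟩, fun h' hc hg hx => funext fun a => ?_⟩
  obtain ⟨k, hk⟩ := Odometer.exists_tendsto_iterate hn (e x) (e a)
  have hlim : Tendsto (fun i => g^[k i] x) atTop (𝓝 a) := by
    have h1 := (e.symm.continuous.tendsto (e a)).comp hk
    rw [e.symm_apply_apply] at h1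
    refine h1.congr fun i => ?_
    have h2 : Semiconj e.symm (odometerAdd n hd) g := he'
    rw [comp_apply, (h2.iterate_right (k i)).eq, e.symm_apply_apply]
  -- The equalizer of the two morphisms is closed and contains the forward orbit of `x`.
  refine (isClosed_eq hc (Homeomorph.continuous ((e.trans t).trans e.symm))).mem_of_tendsto hlim
    (Eventually.of_forall fun i => ?_)
  have h1 : Semiconj h' g g := hg
  have h2 : Semiconj ((e.trans t).trans e.symm) g g := hcomm
  change h' (g^[k i] x) = ((e.trans t).trans e.symm) (g^[k i] x)
  rw [(h1.iterate_right (k i)).eq, (h2.iterate_right (k i)).eq, hx, hxy]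
end

section
/- Let (X, f) be an indecomposable dynamical system, let (A, g) be a dynamical system topologically conjugate to an odometer, and let π1, π2 : (X, f) → (A, g) be projections. Then the partitions of X into fibers of π1 and of π2 coincide; that is, for every x ∈ X one has π1⁻¹(π1(x)) = π2⁻¹(π2(x)). -/
/-!
An indecomposable system admits no nonconstant continuous invariant function into a discrete
space, since each level set and its complement would decompose it. Transport the target to the
odometer and look at level `i`: both projections advance the coordinate in `ZMod (n i)` by `1`
under `f`, so the difference of their coordinates is invariant and therefore constant. Hence
the two projections differ by a translation of the odometer, and a translation is injective,
so it does not change the fibers.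
-/

open Set Function

/-- On an indecomposable system, an invariant continuous function to a discrete space is
constant. -/
theorem Indecomposable.eq_of_invariant {X Y : Type*} [TopologicalSpace X] [TopologicalSpace Y]
    [DiscreteTopology Y] {f : X ≃ₜ X} (hind : Indecomposable (⇑f)) {d : X → Y}
    (hd : Continuous d) (hf : ∀ x, d (f x) = d x) (x y : X) : d x = d y := by
  have inv : ∀ S : Set Y, f '' (d ⁻¹' S) = d ⁻¹' S := by
    intro S
    rw [f.image_eq_preimage_symm]
    ext z
    have hz : d (f.symm z) = d z := by rw [← hf, f.apply_symm_apply]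
    simp [hz]
  rcases hind (d ⁻¹' {d x}) (d ⁻¹' {d x}ᶜ) ((isClosed_discrete _).preimage hd)
    ((isClosed_discrete _).preimage hd) (inv _) (inv _)
    (disjoint_compl_right.preimage d) (by rw [← preimage_union]; simp) with h | h
  · exact absurd (show x ∈ d ⁻¹' {d x} from rfl) (h ▸ notMem_empty x)
  · by_contra hxy
    exact notMem_empty y (h ▸ (show y ∈ d ⁻¹' {d x}ᶜ from fun e => hxy (Eq.symm e)))

/-- projections of an indecomposable system onto a system conjugate
to an odometer all have the same fibers. -/
theorem stmt17 {X A : Type*} [TopologicalSpace X] [CompactSpace X] [T2Space X]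
    [TopologicalSpace A] [CompactSpace A] [T2Space A]
    (f : X ≃ₜ X) (g : A ≃ₜ A) (hind : Indecomposable (⇑f))
    (hconj : ∃ (n : ℕ → ℕ) (hd : ∀ i, n i ∣ n (i + 1)),
      (∀ i, 0 < n i) ∧ ∃ h : A ≃ₜ OdometerCarrier n hd,
        ∀ a, h (g a) = odometerAdd n hd (h a))
    (π₁ π₂ : X → A)
    (hc₁ : Continuous π₁) (hs₁ : Function.Surjective π₁)
    (he₁ : ∀ x, π₁ (f x) = g (π₁ x))
    (hc₂ : Continuous π₂) (hs₂ : Function.Surjective π₂)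
    (he₂ : ∀ x, π₂ (f x) = g (π₂ x)) :
    ∀ x : X, π₁ ⁻¹' {π₁ x} = π₂ ⁻¹' {π₂ x} := by
  obtain ⟨n, hd, -, h, hh⟩ := hconj
  have hcoord : ∀ i, Continuous fun a : A => (h a).1 i := fun i =>
    (continuous_apply i).comp (continuous_subtype_val.comp h.continuous)
  have hstep : ∀ i a, (h (g a)).1 i = (h a).1 i + 1 := fun i a => by rw [hh]; rfl
  have hconst : ∀ i x y,
      (h (π₁ x)).1 i - (h (π₂ x)).1 i = (h (π₁ y)).1 i - (h (π₂ y)).1 i := by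
    intro i
    -- As `ZMod (n i)` is discrete, subtraction is continuous on its square.
    have hsub : Continuous fun p : ZMod (n i) × ZMod (n i) => p.1 - p.2 :=
      continuous_of_discreteTopology
    refine hind.eq_of_invariant (d := fun x => (h (π₁ x)).1 i - (h (π₂ x)).1 i) ?_ ?_
    · exact hsub.comp (((hcoord i).comp hc₁).prodMk ((hcoord i).comp hc₂))
    · intro x
      simp only [he₁, he₂, hstep, add_sub_add_right_eq_sub]
  have hext : ∀ a b : A, a = b ↔ ∀ i, (h a).1 i = (h b).1 i := fun a b => by
    rw [← h.injective.eq_iff, Subtype.ext_iff, funext_iff]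
  intro x
  ext y
  simp only [mem_preimage, mem_singleton_iff, hext]
  refine forall_congr' fun i => ?_
  have hxy := hconst i x y
  constructor <;> intro e
  · rw [e] at hxy
    exact (sub_right_injective hxy).symm
  · rw [e] at hxy
    exact (sub_left_injective hxy).symm
end
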